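/- arXiv:1812.10789 — 3 statements merged into one kernel-verified Lean document; each statement's English description precedes it below -/
import Mathlib

section
/- Let θ : A → A^ℓ be a primitive substitution of constant length ℓ over a finite alphabet A such that X_θ is infinite, (X_θ,σ) has discrete spectrum, and c(θ) > 0. Then the maps σ^i∘θ, 0 ≤ i < ℓ, are contractions of the Besicovitch space ([Σ],D_1), the set [X_θ] is compact, the sets (σ^i∘θ)([X_θ]), 0 ≤ i < ℓ, are pairwise disjoint, and [X_θ] = ⋃_{i=0}^{ℓ−1} (σ^i∘θ)([X_θ]); that is, {σ^i∘θ}_{0≤i<ℓ} is an iterated function system satisfying the strong separation condition whose attractor is [X_θ]. -/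
open Filter Topology Set MeasureTheory
open scoped ENNReal

noncomputable section

/-- The upper density of a set of natural numbers. -/
def upperDensity (E : Set ℕ) : ℝ :=
  Filter.limsup (fun n : ℕ =>
    (∑ k ∈ Finset.range n, E.indicator (fun _ => (1 : ℝ)) k) / n) Filter.atTop

/-- `S` is an `(f,δ,ν)`-separated subset of `X`, with respect to the distance `ρ`. -/
def IsSepSet {α : Type*} (ρ : α → α → ℝ) (f : α → α) (X : Set α) (δ ν : ℝ) (S : Set α) : Prop :=
  S ⊆ X ∧ ∀ x ∈ S, ∀ y ∈ S, x ≠ y → ν ≤ upperDensity {k : ℕ | δ ≤ ρ (f^[k] x) (f^[k] y)}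

/-- The asymptotic separation number `Sep(f,δ,ν)` of `f` on `X`. -/
def sepNum {α : Type*} (ρ : α → α → ℝ) (f : α → α) (X : Set α) (δ ν : ℝ) : ℕ∞ :=
  ⨆ (S : Set α) (_ : IsSepSet ρ f X δ ν S), S.encard

/-- The quantity `log s / (- log ν)`, with value `∞` if `s = ∞`. -/
def logRatio (s : ℕ∞) (ν : ℝ) : ℝ≥0∞ :=
  if s = ⊤ then ⊤ else ENNReal.ofReal (Real.log (s.toNat : ℝ) / (- Real.log ν))

/-- The lower amorphic complexity of `f` on `X`. -/
def acLower {α : Type*} (ρ : α → α → ℝ) (f : α → α) (X : Set α) : ℝ≥0∞ :=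
  ⨆ (δ : ℝ) (_ : 0 < δ),
    Filter.liminf (fun ν : ℝ => logRatio (sepNum ρ f X δ ν) ν) (𝓝[>] (0 : ℝ))

/-- The upper amorphic complexity of `f` on `X`. -/
def acUpper {α : Type*} (ρ : α → α → ℝ) (f : α → α) (X : Set α) : ℝ≥0∞ :=
  ⨆ (δ : ℝ) (_ : 0 < δ),
    Filter.limsup (fun ν : ℝ => logRatio (sepNum ρ f X δ ν) ν) (𝓝[>] (0 : ℝ))

/-- The left shift on `A^ℤ`. -/
def shift {A : Type*} (x : ℤ → A) : ℤ → A := fun n => x (n + 1)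

open scoped Classical in
/-- The Cantor metric `d(x,y) = 2^{-min{|k| : x_k ≠ y_k}}` on `A^ℤ`. -/
def cantorDist {A : Type*} (x y : ℤ → A) : ℝ :=
  if x = y then 0
  else (2 : ℝ) ^ (-((sInf {n : ℕ | ∃ k : ℤ, k.natAbs = n ∧ x k ≠ y k} : ℕ) : ℤ))

/-- The Besicovitch pseudometric `D_1` on `A^ℤ`. -/
def besD1 {A : Type*} (x y : ℤ → A) : ℝ :=
  upperDensity {k : ℕ | x (k : ℤ) ≠ y (k : ℤ)}

/-- The Besicovitch pseudometric `D_B` associated to a map `f` and a distance `ρ`. -/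
def besDB {α : Type*} (ρ : α → α → ℝ) (f : α → α) (x y : α) : ℝ :=
  Filter.limsup (fun n : ℕ => (∑ k ∈ Finset.range n, ρ (f^[k] x) (f^[k] y)) / n) Filter.atTop

/-- The pseudometric `D_δ` on `A^ℤ` associated to a metric `ρ` on `A^ℤ`. -/
def Ddelta {A : Type*} (ρ : (ℤ → A) → (ℤ → A) → ℝ) (δ : ℝ) (x y : ℤ → A) : ℝ :=
  upperDensity {k : ℕ | δ ≤ ρ (shift^[k] x) (shift^[k] y)}

/-- The closure of the two-sided shift orbit of `x₀`. -/
def orbitClosure {A : Type*} [TopologicalSpace A] (x₀ : ℤ → A) : Set (ℤ → A) :=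
  closure {y | ∃ k : ℤ, y = fun n => x₀ (n + k)}

/-- The extension of a constant length substitution `θ : A → A^ℓ` to `A^ℤ`,
via `θ(x)_{ℓk+i} = θ(x_k)_i`. -/
def substApply {A : Type*} {ℓ : ℕ} (hℓ : 0 < ℓ) (θ : A → Fin ℓ → A)
    (x : ℤ → A) : ℤ → A := fun n =>
  θ (x (n / (ℓ : ℤ))) ⟨(n % (ℓ : ℤ)).toNat, by
    have h1 : 0 ≤ n % (ℓ : ℤ) := Int.emod_nonneg n (by exact_mod_cast hℓ.ne')
    have h2 : n % (ℓ : ℤ) < (ℓ : ℤ) := Int.emod_lt_of_pos n (by exact_mod_cast hℓ)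
    omega⟩

/-- A constant length substitution is primitive if some power `θ^m` of it is such that
every letter `b` occurs in every word `θ^m(a)`. -/
def IsPrimitive {A : Type*} {ℓ : ℕ} (hℓ : 0 < ℓ) (θ : A → Fin ℓ → A) : Prop :=
  ∃ m : ℕ, 1 ≤ m ∧ ∀ a b : A, ∃ j : ℤ, 0 ≤ j ∧ j < (ℓ : ℤ) ^ m ∧
    (substApply hℓ θ)^[m] (fun _ => a) j = b

open scoped Classical in
/-- The number of positions at which the words `θ(a)` and `θ(b)` agree. -/
def coincCount {A : Type*} {ℓ : ℕ} (θ : A → Fin ℓ → A) (a b : A) : ℕ :=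
  (Finset.univ.filter (fun j : Fin ℓ => θ a j = θ b j)).card

/-- `c(θ)`, the minimum of `coincCount θ a b` over pairs `a ≠ b`. -/
def cMin {A : Type*} {ℓ : ℕ} (θ : A → Fin ℓ → A) : ℕ :=
  sInf {n : ℕ | ∃ a b : A, a ≠ b ∧ coincCount θ a b = n}

/-- `C(θ)`, the maximum of `coincCount θ a b` over pairs `a ≠ b`. -/
def cMax {A : Type*} {ℓ : ℕ} (θ : A → Fin ℓ → A) : ℕ :=
  sSup {n : ℕ | ∃ a b : A, a ≠ b ∧ coincCount θ a b = n}

/-- `S` is `ε`-separated with respect to the distance `ρ`. -/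
def IsEpsSeparated {α : Type*} (ρ : α → α → ℝ) (ε : ℝ) (S : Set α) : Prop :=
  ∀ x ∈ S, ∀ y ∈ S, x ≠ y → ε ≤ ρ x y

/-- `M_ε(E)`: the maximal cardinality of an `ε`-separated subset of `E`. -/
def packNum {α : Type*} (ρ : α → α → ℝ) (ε : ℝ) (E : Set α) : ℕ∞ :=
  ⨆ (S : Set α) (_ : S ⊆ E ∧ IsEpsSeparated ρ ε S), S.encard

/-- The lower box dimension of `E` with respect to the distance `ρ`. -/
def lowerBoxDim {α : Type*} (ρ : α → α → ℝ) (E : Set α) : ℝ≥0∞ :=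
  Filter.liminf (fun ε : ℝ => logRatio (packNum ρ ε E) ε) (𝓝[>] (0 : ℝ))

/-- The upper box dimension of `E` with respect to the distance `ρ`. -/
def upperBoxDim {α : Type*} (ρ : α → α → ℝ) (E : Set α) : ℝ≥0∞ :=
  Filter.limsup (fun ε : ℝ => logRatio (packNum ρ ε E) ε) (𝓝[>] (0 : ℝ))

/-- Mean equicontinuity of `f` on `X` with respect to the distance `ρ`. -/
def MeanEquicontinuousOn {α : Type*} (ρ : α → α → ℝ) (f : α → α) (X : Set α) : Prop :=
  ∀ ν : ℝ, 0 < ν → ∃ δ : ℝ, 0 < δ ∧ ∀ x ∈ X, ∀ y ∈ X, ρ x y < δ → besDB ρ f x y < ν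

/-- The subshift `X` has discrete spectrum: for every shift-invariant Borel probability
measure giving `X` full measure (there is exactly one for the systems under consideration),
`L²` has a Hilbert basis of eigenfunctions of the shift. -/
def HasDiscreteSpectrum {A : Type*} [MeasurableSpace A] (X : Set (ℤ → A)) : Prop :=
  ∀ μ : Measure (ℤ → A), IsProbabilityMeasure μ → MeasurePreserving shift μ μ → μ X = 1 →
    ∃ (ι : Type) (b : HilbertBasis ι ℂ (Lp ℂ 2 μ)), ∀ i : ι, ∃ c : ℂ,
      (fun z => (b i : Lp ℂ 2 μ) (shift z)) =ᵐ[μ] (fun z => c * (b i : Lp ℂ 2 μ) z)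

end

open scoped Classical in
/-- Number of mismatches of `x` and `y` on `[0,n)`. -/
noncomputable def mism {A : Type*} (x y : ℤ → A) (n : ℕ) : ℕ :=
  ((Finset.range n).filter (fun k : ℕ => x (k : ℤ) ≠ y (k : ℤ))).card

theorem besD1_eq {A : Type*} (x y : ℤ → A) :
    besD1 x y = Filter.limsup (fun n : ℕ => (mism x y n : ℝ) / n) Filter.atTop := by
  classical
  unfold besD1 upperDensity mism
  congr 1
  funext n
  congr 1
  simp only [Set.indicator_apply, Set.mem_ofPred_eq]
  rw [Finset.sum_ite]
  simp

theorem mism_le {A : Type*} (x y : ℤ → A) (n : ℕ) : mism x y n ≤ n := by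
  classical
  unfold mism
  exact (Finset.card_filter_le _ _).trans (by simp)

theorem mism_ratio_le {A : Type*} (x y : ℤ → A) (n : ℕ) : (mism x y n : ℝ) / n ≤ 1 := by
  have h : (mism x y n : ℝ) ≤ n := by exact_mod_cast mism_le x y n
  exact div_le_one_of_le₀ h (by positivity)

theorem mism_bdd {A : Type*} (x y : ℤ → A) :
    Filter.IsBoundedUnder (· ≤ ·) atTop (fun n : ℕ => (mism x y n : ℝ) / n) :=
  Filter.isBoundedUnder_of ⟨1, mism_ratio_le x y⟩

theorem mism_cobdd {A : Type*} (x y : ℤ → A) :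
    Filter.IsCoboundedUnder (· ≤ ·) atTop (fun n : ℕ => (mism x y n : ℝ) / n) := by
  apply Filter.IsBoundedUnder.isCoboundedUnder_le
  exact Filter.isBoundedUnder_of ⟨0, fun n => by positivity⟩

theorem besD1_le_one {A : Type*} (x y : ℤ → A) : besD1 x y ≤ 1 := by
  rw [besD1_eq]
  exact Filter.limsup_le_of_le (mism_cobdd x y) (Eventually.of_forall (mism_ratio_le x y))

theorem besD1_le {A : Type*} (x y : ℤ → A) (b : ℝ)
    (h : ∀ᶠ n : ℕ in atTop, (mism x y n : ℝ) ≤ b * n) : besD1 x y ≤ b := by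
  rw [besD1_eq]
  apply Filter.limsup_le_of_le (mism_cobdd x y)
  filter_upwards [h, eventually_gt_atTop 0] with n hn hp
  rw [div_le_iff₀ (by exact_mod_cast hp)]
  exact hn

theorem besD1_lt {A : Type*} (x y : ℤ → A) (b : ℝ) (h : besD1 x y < b) :
    ∀ᶠ n : ℕ in atTop, (mism x y n : ℝ) ≤ b * n := by
  rw [besD1_eq] at h
  filter_upwards [Filter.eventually_lt_of_limsup_lt h (mism_bdd x y), eventually_gt_atTop 0]
    with n hn hp
  rw [div_lt_iff₀ (by exact_mod_cast hp)] at hn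
  exact hn.le

theorem besD1_nonneg {A : Type*} (x y : ℤ → A) : 0 ≤ besD1 x y := by
  by_contra h
  push Not at h
  have h1 := besD1_lt x y (besD1 x y / 2) (by linarith)
  obtain ⟨n, hn, hp⟩ := (h1.and (eventually_gt_atTop 0)).exists
  have : (0:ℝ) < n := by exact_mod_cast hp
  have h2 : (0:ℝ) ≤ mism x y n := by positivity
  nlinarith

theorem besD1_symm {A : Type*} (x y : ℤ → A) : besD1 x y = besD1 y x := by
  unfold besD1
  simp only [ne_comm]

/-- General comparison lemma. -/
theorem besD1_compare {A B : Type*} (x y : ℤ → A) (x' y' : ℤ → B) (a b e C : ℕ) (hb : 0 < b)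
    (h : ∀ M, mism x' y' M ≤ a * mism x y (M / b + e) + C) :
    besD1 x' y' ≤ (a : ℝ) / b * besD1 x y := by
  have hb' : (0:ℝ) < b := by exact_mod_cast hb
  have key : ∀ β, besD1 x y < β → ∀ ε, 0 < ε → besD1 x' y' ≤ (a : ℝ) / b * β + ε := by
    intro β hβ ε hε
    have hβ0 : 0 ≤ β := (besD1_nonneg x y).trans hβ.le
    apply besD1_le
    have ht : Tendsto (fun M : ℕ => M / b + e) atTop atTop :=
      Filter.tendsto_atTop_mono (fun M => Nat.le_add_right _ _) (Nat.tendsto_div_const_atTop hb.ne')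
    have h1 := ht.eventually (besD1_lt x y β hβ)
    obtain ⟨K, hK⟩ := exists_nat_gt (((a:ℝ) * β * e + C) / ε)
    filter_upwards [h1, eventually_ge_atTop K] with M hM hMK
    have h2 : (mism x' y' M : ℝ) ≤ a * mism x y (M / b + e) + C := by exact_mod_cast h M
    have h3 : ((M / b + e : ℕ) : ℝ) ≤ M / b + e := by
      push_cast
      gcongr
      exact Nat.cast_div_le
    have h4 : (K:ℝ) ≤ M := by exact_mod_cast hMK
    rw [div_lt_iff₀ hε] at hK
    have h5 : (a:ℝ) * mism x y (M / b + e) ≤ a * (β * (M / b + e)) := by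
      gcongr
      exact hM.trans (by gcongr)
    have h6 : (a:ℝ) * (β * (M / b + e)) = a / b * β * M + a * β * e := by
      field_simp
    have h7 : (K:ℝ) * ε ≤ M * ε := by gcongr
    nlinarith
  refine le_of_forall_pos_le_add fun ε hε => ?_
  have hab : 0 ≤ (a:ℝ)/b := by positivity
  have := key (besD1 x y + ε / 2 / ((a:ℝ)/b + 1)) (by
    have : 0 < ε / 2 / ((a:ℝ)/b + 1) := by positivity
    linarith) (ε/2) (by positivity)
  have h8 : (a:ℝ)/b * (ε / 2 / ((a:ℝ)/b + 1)) ≤ ε / 2 := by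
    rw [mul_div_assoc', div_le_iff₀ (by positivity)]
    nlinarith
  nlinarith

theorem mism_mono {A : Type*} (x y : ℤ → A) {m n : ℕ} (h : m ≤ n) : mism x y m ≤ mism x y n := by
  classical
  unfold mism
  apply Finset.card_le_card
  intro k hk
  simp only [Finset.mem_filter, Finset.mem_range] at hk ⊢
  exact ⟨hk.1.trans_le h, hk.2⟩

/-- Changing `x` before time `M` does not change the distance. -/
theorem besD1_tail {A : Type*} (x x' y : ℤ → A) (M : ℕ)
    (h : ∀ k : ℕ, M ≤ k → x' (k : ℤ) = x k) : besD1 x' y ≤ besD1 x y := by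
  classical
  have := besD1_compare x y x' y 1 1 0 M one_pos (fun n => ?_)
  · simpa using this
  · simp only [one_mul, Nat.div_one, add_zero]
    unfold mism
    calc _ ≤ (((Finset.range n).filter (fun k : ℕ => x (k : ℤ) ≠ y (k : ℤ))) ∪ Finset.range M).card := by
            apply Finset.card_le_card
            intro k hk
            simp only [Finset.mem_filter, Finset.mem_range, Finset.mem_union] at hk ⊢
            by_cases hkM : k < M
            · exact Or.inr hkM
            · left
              refine ⟨hk.1, ?_⟩
              rw [← h k (by omega)]
              exact hk.2
      _ ≤ _ := (Finset.card_union_le _ _).trans (by simp)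

theorem besD1_self {A : Type*} (x : ℤ → A) : besD1 x x = 0 := by
  apply le_antisymm _ (besD1_nonneg _ _)
  apply besD1_le
  simp [mism]

theorem besD1_tail_zero {A : Type*} (x x' : ℤ → A) (M : ℕ)
    (h : ∀ k : ℕ, M ≤ k → x' (k : ℤ) = x k) : besD1 x' x = 0 :=
  le_antisymm ((besD1_tail x x' x M h).trans (besD1_self x).le) (besD1_nonneg _ _)

/-- Shift by an integer. -/
def shf {A : Type*} (k : ℤ) (x : ℤ → A) : ℤ → A := fun n => x (n + k)

theorem shift_iter {A : Type*} (i : ℕ) (x : ℤ → A) : shift^[i] x = shf (i : ℤ) x := by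
  induction i generalizing x with
  | zero => funext n; simp [shf]
  | succ i ih =>
    rw [Function.iterate_succ_apply, ih]
    funext n
    simp only [shf, shift]
    congr 1
    push_cast
    ring

theorem shf_shf {A : Type*} (k l : ℤ) (x : ℤ → A) : shf k (shf l x) = shf (k + l) x := by
  funext n
  simp only [shf]
  congr 1
  ring

theorem shf_zero {A : Type*} (x : ℤ → A) : shf 0 x = x := by
  funext n
  simp [shf]

theorem mism_shf_le {A : Type*} (x y : ℤ → A) (i n : ℕ) :
    mism (shf i x) (shf i y) n ≤ mism x y (n + i) := by
  classical
  unfold mism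
  apply Finset.card_le_card_of_injOn (fun k => k + i)
  · intro k hk
    have hk' := Finset.mem_filter.1 (Finset.mem_coe.1 hk)
    have hk1 := Finset.mem_range.1 hk'.1
    refine Finset.mem_coe.2 (Finset.mem_filter.2 ⟨Finset.mem_range.2 (show k + i < n + i by omega), ?_⟩)
    have hk2 := hk'.2
    simp only [shf] at hk2
    push_cast
    exact hk2
  · intro a _ b _ h
    simpa using h

theorem mism_le_shf {A : Type*} (x y : ℤ → A) (i n : ℕ) :
    mism x y n ≤ mism (shf i x) (shf i y) n + i := by
  classical
  unfold mism
  calc _ ≤ ((((Finset.range n).filter (fun k : ℕ => shf i x (k : ℤ) ≠ shf i y (k : ℤ))).image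
              (fun k => k + i)) ∪ Finset.range i).card := by
          apply Finset.card_le_card
          intro k hk
          simp only [Finset.mem_filter, Finset.mem_range, Finset.mem_union, Finset.mem_image] at hk ⊢
          by_cases hki : k < i
          · exact Or.inr hki
          · left
            refine ⟨k - i, ⟨by omega, ?_⟩, by omega⟩
            simp only [shf]
            have : ((k - i : ℕ) : ℤ) + i = k := by omega
            rw [this]
            exact hk.2
    _ ≤ _ := (Finset.card_union_le _ _).trans (by
          have := Finset.card_image_le
            (s := (Finset.range n).filter (fun k : ℕ => shf i x (k : ℤ) ≠ shf i y (k : ℤ)))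
            (f := fun k => k + i)
          simp only [Finset.card_range]
          omega)

theorem besD1_shf {A : Type*} (x y : ℤ → A) (i : ℕ) :
    besD1 (shf i x) (shf i y) = besD1 x y := by
  apply le_antisymm
  · have := besD1_compare x y (shf i x) (shf i y) 1 1 i 0 one_pos (fun n => by
      simpa using mism_shf_le x y i n)
    simpa using this
  · have := besD1_compare (shf i x) (shf i y) x y 1 1 0 i one_pos (fun n => by
      simpa using mism_le_shf x y i n)
    simpa using this

/-- If every window of length `W` has a mismatch, the distance is at least `1/W`. -/
theorem besD1_ge {A : Type*} (x y : ℤ → A) (W : ℕ) (hW : 0 < W)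
    (h : ∀ k : ℕ, ∃ j : ℕ, k ≤ j ∧ j < k + W ∧ x (j : ℤ) ≠ y j) : 1 / (W : ℝ) ≤ besD1 x y := by
  classical
  have hcount : ∀ n, n ≤ mism x y (W * n) := by
    intro n
    choose f hf1 hf2 hf3 using h
    unfold mism
    calc n = (Finset.range n).card := by simp
      _ ≤ _ := by
        apply Finset.card_le_card_of_injOn (fun q => f (W * q))
        · intro q hq
          simp only [Finset.coe_range, Set.mem_Iio, Finset.coe_filter, Finset.mem_range,
            Set.mem_ofPred_eq] at hq ⊢
          refine ⟨?_, hf3 _⟩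
          have := hf2 (W * q)
          have : W * (q + 1) ≤ W * n := Nat.mul_le_mul_left _ hq
          nlinarith
        · intro a _ b _ hab
          simp only at hab
          have a1 := hf1 (W * a)
          have a2 := hf2 (W * a)
          have b1 := hf1 (W * b)
          have b2 := hf2 (W * b)
          rw [hab] at a1 a2
          by_contra hne
          rcases lt_or_gt_of_ne hne with h | h
          · have : W * (a + 1) ≤ W * b := Nat.mul_le_mul_left _ h
            nlinarith
          · have : W * (b + 1) ≤ W * a := Nat.mul_le_mul_left _ h
            nlinarith
  by_contra hlt
  push Not at hlt
  obtain ⟨β, hβ1, hβ2⟩ := exists_between hlt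
  have h1 := besD1_lt x y β hβ1
  have ht : Tendsto (fun n : ℕ => W * n) atTop atTop :=
    tendsto_id.const_mul_atTop' hW
  obtain ⟨n, hn, hn0⟩ := ((ht.eventually h1).and (eventually_gt_atTop 0)).exists
  have h2 : (n:ℝ) ≤ mism x y (W * n) := by exact_mod_cast hcount n
  have hW' : (0:ℝ) < W := by exact_mod_cast hW
  have hn' : (0:ℝ) < n := by exact_mod_cast hn0
  rw [lt_div_iff₀ hW'] at hβ2
  push_cast at hn
  nlinarith

theorem subst_congr {A : Type*} {ℓ : ℕ} (hℓ : 0 < ℓ) (θ : A → Fin ℓ → A) (x x' : ℤ → A)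
    (n n' : ℤ) (h : x (n / ℓ) = x' (n' / ℓ)) (h' : n % ℓ = n' % ℓ) :
    substApply hℓ θ x n = substApply hℓ θ x' n' := by
  unfold substApply
  rw [h]
  congr 1
  simp only [h']

theorem subst_shf {A : Type*} {ℓ : ℕ} (hℓ : 0 < ℓ) (θ : A → Fin ℓ → A) (x : ℤ → A) (k : ℤ) :
    substApply hℓ θ (shf k x) = shf (ℓ * k) (substApply hℓ θ x) := by
  have hl : (ℓ : ℤ) ≠ 0 := by exact_mod_cast hℓ.ne'
  funext n
  unfold shf
  apply subst_congr
  · rw [Int.add_mul_ediv_left _ _ hl]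
  · rw [Int.add_mul_emod_self_left]

/-- Contraction property. -/
theorem mism_subst {A : Type*} {ℓ : ℕ} (hℓ : 0 < ℓ) (θ : A → Fin ℓ → A) (x y : ℤ → A) (n : ℕ) :
    mism (substApply hℓ θ x) (substApply hℓ θ y) (ℓ * n) ≤ (ℓ - cMin θ) * mism x y n := by
  classical
  unfold mism
  rw [mul_comm (ℓ - cMin θ)]
  calc _ ≤ (((Finset.range n).filter (fun k : ℕ => x (k : ℤ) ≠ y (k : ℤ))).biUnion (fun k =>
        ((Finset.univ.filter (fun j : Fin ℓ => ¬ θ (x k) j = θ (y k) j)).image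
          (fun j : Fin ℓ => ℓ * k + (j : ℕ))))).card := by
        apply Finset.card_le_card
        intro q hq
        simp only [Finset.mem_filter, Finset.mem_range, Finset.mem_biUnion, Finset.mem_image,
          Finset.mem_univ, true_and] at hq ⊢
        obtain ⟨hq1, hq2⟩ := hq
        have hne : ¬ θ (x ((q / ℓ : ℕ) : ℤ)) ⟨q % ℓ, Nat.mod_lt _ hℓ⟩ =
            θ (y ((q / ℓ : ℕ) : ℤ)) ⟨q % ℓ, Nat.mod_lt _ hℓ⟩ := by
          intro h
          apply hq2
          unfold substApply
          have e1 : (q : ℤ) / ℓ = ((q / ℓ : ℕ) : ℤ) := by simp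
          have e2 : ((q : ℤ) % ℓ).toNat = q % ℓ := by
            have : (q : ℤ) % ℓ = ((q % ℓ : ℕ) : ℤ) := by simp
            rw [this, Int.toNat_natCast]
          simp only [e1, e2]
          exact h
        refine ⟨q / ℓ, ⟨?_, ?_⟩, ⟨q % ℓ, Nat.mod_lt _ hℓ⟩, hne, Nat.div_add_mod q ℓ⟩
        · rw [Nat.div_lt_iff_lt_mul hℓ]
          linarith
        · intro h
          exact hne (by rw [h])
    _ ≤ _ := by
        apply Finset.card_biUnion_le_card_mul
        intro k hk
        simp only [Finset.mem_filter, Finset.mem_range] at hk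
        refine Finset.card_image_le.trans ?_
        have h1 : cMin θ ≤ coincCount θ (x k) (y k) := Nat.sInf_le ⟨x k, y k, hk.2, rfl⟩
        have h2 := Finset.card_filter_add_card_filter_not (s := (Finset.univ : Finset (Fin ℓ)))
          (fun j : Fin ℓ => θ (x k) j = θ (y k) j)
        unfold coincCount at h1
        simp only [Finset.card_univ, Fintype.card_fin] at h2
        have h3 : (Finset.univ.filter (fun j : Fin ℓ => θ (x k) j = θ (y k) j)).card =
          coincCount θ (x k) (y k) := by
          unfold coincCount
          congr
        unfold coincCount at h3
        omega

theorem besD1_subst {A : Type*} {ℓ : ℕ} (hℓ : 0 < ℓ) (θ : A → Fin ℓ → A) (x y : ℤ → A) :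
    besD1 (substApply hℓ θ x) (substApply hℓ θ y) ≤ (((ℓ - cMin θ : ℕ) : ℝ) / ℓ) * besD1 x y := by
  apply besD1_compare x y _ _ (ℓ - cMin θ) ℓ 1 0 hℓ
  intro M
  rw [add_zero]
  refine le_trans (mism_mono _ _ ?_) (mism_subst hℓ θ x y (M / ℓ + 1))
  have := Nat.div_add_mod M ℓ
  have := Nat.mod_lt M hℓ
  rw [mul_add]
  omega

/-- Iterated substitution. -/
noncomputable def sI {A : Type*} {ℓ : ℕ} (hℓ : 0 < ℓ) (θ : A → Fin ℓ → A) (n : ℕ) (x : ℤ → A) : ℤ → A :=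
  (substApply hℓ θ)^[n] x

section
variable {A : Type*} {ℓ : ℕ} (hℓ : 0 < ℓ) (θ : A → Fin ℓ → A)

theorem sI_zero (x : ℤ → A) : sI hℓ θ 0 x = x := rfl

theorem sI_one (x : ℤ → A) : sI hℓ θ 1 x = substApply hℓ θ x := rfl

theorem sI_add (m n : ℕ) (x : ℤ → A) : sI hℓ θ (m + n) x = sI hℓ θ m (sI hℓ θ n x) :=
  Function.iterate_add_apply _ m n x

theorem sI_succ (n : ℕ) (x : ℤ → A) : sI hℓ θ (n + 1) x = substApply hℓ θ (sI hℓ θ n x) :=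
  Function.iterate_succ_apply' _ n x

theorem sI_shf (n : ℕ) (k : ℤ) (x : ℤ → A) :
    sI hℓ θ n (shf k x) = shf ((ℓ : ℤ) ^ n * k) (sI hℓ θ n x) := by
  induction n with
  | zero => simp [sI_zero]
  | succ n ih =>
    rw [sI_succ, sI_succ, ih, subst_shf]
    congr 1
    ring

/-- Locality of the iterated substitution. -/
theorem sI_loc (n : ℕ) (x x' : ℤ → A) (k k' j : ℤ) (hj0 : 0 ≤ j) (hj : j < (ℓ : ℤ) ^ n)
    (h : x k = x' k') :
    sI hℓ θ n x ((ℓ : ℤ) ^ n * k + j) = sI hℓ θ n x' ((ℓ : ℤ) ^ n * k' + j) := by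
  have hl : (0:ℤ) < (ℓ : ℤ) := by exact_mod_cast hℓ
  induction n generalizing j with
  | zero =>
    have : j = 0 := by simp at hj; omega
    simp [sI_zero, this, h]
  | succ n ih =>
    rw [sI_succ, sI_succ]
    have e : ∀ k : ℤ, (ℓ : ℤ) ^ (n + 1) * k + j = j + ℓ * ((ℓ : ℤ) ^ n * k) := fun k => by ring
    rw [e k, e k']
    apply subst_congr
    · rw [Int.add_mul_ediv_left _ _ hl.ne', Int.add_mul_ediv_left _ _ hl.ne', add_comm,
        add_comm (j / (ℓ : ℤ))]
      apply ih
      · exact Int.ediv_nonneg hj0 hl.le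
      · apply Int.ediv_lt_of_lt_mul hl
        rw [pow_succ] at hj
        exact hj
    · rw [Int.add_mul_emod_self_left, Int.add_mul_emod_self_left]

theorem sI_loc0 (n : ℕ) (x x' : ℤ → A) (k j : ℤ) (hj0 : 0 ≤ j) (hj : j < (ℓ : ℤ) ^ n)
    (h : x k = x' 0) :
    sI hℓ θ n x ((ℓ : ℤ) ^ n * k + j) = sI hℓ θ n x' j := by
  have := sI_loc hℓ θ n x x' k 0 j hj0 hj h
  simpa using this

/-- The value at `q` depends only on the letter at `q / ℓ^n`. -/
theorem sI_dep (n : ℕ) (x x' : ℤ → A) (q : ℤ) (h : x (q / (ℓ : ℤ) ^ n) = x' (q / (ℓ : ℤ) ^ n)) :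
    sI hℓ θ n x q = sI hℓ θ n x' q := by
  have hl : (0:ℤ) < (ℓ : ℤ) ^ n := by positivity
  have := sI_loc hℓ θ n x x' _ _ (q % (ℓ : ℤ) ^ n) (Int.emod_nonneg _ hl.ne')
    (Int.emod_lt_of_pos _ hl) h
  rwa [Int.mul_ediv_add_emod] at this

theorem besD1_sI (n : ℕ) (x y : ℤ → A) :
    besD1 (sI hℓ θ n x) (sI hℓ θ n y) ≤ (((ℓ - cMin θ : ℕ) : ℝ) / ℓ) ^ n := by
  induction n with
  | zero => simpa using besD1_le_one _ _
  | succ n ih =>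
    rw [sI_succ, sI_succ, pow_succ']
    refine (besD1_subst hℓ θ _ _).trans ?_
    gcongr

end

/-- Ultrafilter limits of sequences. -/
theorem ulim_exists {A : Type*} [Finite A] (u : ℕ → ℤ → A) :
    ∃ w : ℤ → A, ∀ q, ∀ᶠ N in (hyperfilter ℕ : Filter ℕ), u N q = w q := by
  have : ∀ q, ∃ a, ∀ᶠ N in (hyperfilter ℕ : Filter ℕ), u N q = a := by
    intro q
    rw [← Ultrafilter.eventually_exists_iff]
    exact Eventually.of_forall fun N => ⟨_, rfl⟩
  choose w hw using this
  exact ⟨w, hw⟩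

theorem ulim_window {A : Type*} {u : ℕ → ℤ → A} {w : ℤ → A}
    (h : ∀ q, ∀ᶠ N in (hyperfilter ℕ : Filter ℕ), u N q = w q) (a b : ℤ) :
    ∀ᶠ N in (hyperfilter ℕ : Filter ℕ), ∀ q, a ≤ q → q < b → u N q = w q := by
  have := (Filter.eventually_all_finset (Finset.Ico a b) (l := (hyperfilter ℕ : Filter ℕ))
    (p := fun q N => u N q = w q)).2 (fun q _ => h q)
  filter_upwards [this] with N hN q h1 h2
  exact hN q (Finset.mem_Ico.2 ⟨h1, h2⟩)

theorem ulim_sI {A : Type*} {ℓ : ℕ} (hℓ : 0 < ℓ) (θ : A → Fin ℓ → A) (n : ℕ)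
    {u : ℕ → ℤ → A} {w : ℤ → A}
    (h : ∀ q, ∀ᶠ N in (hyperfilter ℕ : Filter ℕ), u N q = w q) (q : ℤ) :
    ∀ᶠ N in (hyperfilter ℕ : Filter ℕ), sI hℓ θ n (u N) q = sI hℓ θ n w q := by
  filter_upwards [h (q / (ℓ : ℤ) ^ n)] with N hN
  exact sI_dep hℓ θ n _ _ q hN

theorem hyper_ge (M : ℕ) : ∀ᶠ N in (hyperfilter ℕ : Filter ℕ), M ≤ N := by
  have h : (hyperfilter ℕ : Filter ℕ) ≤ atTop := by
    rw [← Nat.cofinite_eq_atTop]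
    exact hyperfilter_le_cofinite
  exact h (eventually_ge_atTop M)

/-- A bounded integer sequence is constant along the ultrafilter. -/
theorem hyper_const (κ : ℕ → ℤ) (B : ℤ) (h : ∀ N, 0 ≤ κ N ∧ κ N < B) :
    ∃ k, 0 ≤ k ∧ k < B ∧ ∀ᶠ N in (hyperfilter ℕ : Filter ℕ), κ N = k := by
  have := (Ultrafilter.eventually_exists_mem_iff (f := hyperfilter ℕ) (is := Set.Ico 0 B)
    (P := fun k N => κ N = k) (Set.finite_Ico 0 B)).1
    (Eventually.of_forall fun N => ⟨κ N, ⟨(h N).1, (h N).2⟩, rfl⟩)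
  obtain ⟨k, hk, hkc⟩ := this
  exact ⟨k, hk.1, hk.2, hkc⟩

/-- The window `[a,b)` of `x` occurs in some `θ^n(c)`. -/
def Leg {A : Type*} {ℓ : ℕ} (hℓ : 0 < ℓ) (θ : A → Fin ℓ → A) (x : ℤ → A) (a b : ℤ) : Prop :=
  ∃ (n : ℕ) (c : A) (i : ℤ), ∀ q, a ≤ q → q < b →
    0 ≤ q + i ∧ q + i < (ℓ : ℤ) ^ n ∧ x q = sI hℓ θ n (fun _ => c) (q + i)

/-- The two-sided sequences all of whose windows are legal. -/
def LY {A : Type*} {ℓ : ℕ} (hℓ : 0 < ℓ) (θ : A → Fin ℓ → A) : Set (ℤ → A) :=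
  {y | ∀ a b, Leg hℓ θ y a b}

section
variable {A : Type*} {ℓ : ℕ} {hℓ : 0 < ℓ} {θ : A → Fin ℓ → A}

theorem Leg.congr {x y : ℤ → A} {a b : ℤ} (h : Leg hℓ θ x a b)
    (hxy : ∀ q, a ≤ q → q < b → x q = y q) : Leg hℓ θ y a b := by
  obtain ⟨n, c, i, hi⟩ := h
  exact ⟨n, c, i, fun q h1 h2 => ⟨(hi q h1 h2).1, (hi q h1 h2).2.1,
    (hxy q h1 h2) ▸ (hi q h1 h2).2.2⟩⟩

theorem Leg.mono {x : ℤ → A} {a b a' b' : ℤ} (h : Leg hℓ θ x a b)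
    (ha : a ≤ a') (hb : b' ≤ b) : Leg hℓ θ x a' b' := by
  obtain ⟨n, c, i, hi⟩ := h
  exact ⟨n, c, i, fun q h1 h2 => hi q (by omega) (by omega)⟩

theorem Leg.shf {x : ℤ → A} {a b : ℤ} (k : ℤ) (h : Leg hℓ θ x (a + k) (b + k)) :
    Leg hℓ θ (shf k x) a b := by
  obtain ⟨n, c, i, hi⟩ := h
  refine ⟨n, c, k + i, fun q h1 h2 => ?_⟩
  have := hi (q + k) (by omega) (by omega)
  rw [← add_assoc]
  exact this

theorem LY_shf {y : ℤ → A} (hy : y ∈ LY hℓ θ) (k : ℤ) : shf k y ∈ LY hℓ θ :=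
  fun _ _ => Leg.shf k (hy _ _)

theorem LY_subst {y : ℤ → A} (hy : y ∈ LY hℓ θ) : substApply hℓ θ y ∈ LY hℓ θ := by
  have hl : (0:ℤ) < (ℓ : ℤ) := by exact_mod_cast hℓ
  intro a b
  obtain ⟨n, c, i, hi⟩ := hy (a / ℓ) (b / ℓ + 1)
  refine ⟨n + 1, c, ℓ * i, fun q h1 h2 => ?_⟩
  obtain ⟨h3, h4, h5⟩ := hi (q / ℓ) (Int.ediv_le_ediv hl h1)
    (by have := Int.ediv_le_ediv hl h2.le; omega)
  have e := Int.mul_ediv_add_emod q ℓ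
  have e1 := Int.emod_nonneg q hl.ne'
  have e2 := Int.emod_lt_of_pos q hl
  refine ⟨?_, ?_, ?_⟩
  · nlinarith
  · rw [pow_succ]
    have : (q / ℓ + i + 1) * (ℓ:ℤ) ≤ (ℓ:ℤ) ^ n * ℓ := mul_le_mul_of_nonneg_right h4 hl.le
    nlinarith
  · rw [sI_succ]
    apply subst_congr
    · rw [Int.add_mul_ediv_left _ _ hl.ne']
      exact h5
    · rw [Int.add_mul_emod_self_left]

theorem LY_sI {y : ℤ → A} (hy : y ∈ LY hℓ θ) (n : ℕ) : sI hℓ θ n y ∈ LY hℓ θ := by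
  induction n with
  | zero => exact hy
  | succ n ih => rw [sI_succ]; exact LY_subst ih

theorem LY_ulim {u : ℕ → ℤ → A} {w : ℤ → A}
    (h : ∀ q, ∀ᶠ N in (hyperfilter ℕ : Filter ℕ), u N q = w q)
    (hu : ∀ a b, ∀ᶠ N in (hyperfilter ℕ : Filter ℕ), Leg hℓ θ (u N) a b) : w ∈ LY hℓ θ := by
  intro a b
  obtain ⟨N, h1, h2⟩ := ((ulim_window h a b).and (hu a b)).exists
  exact h2.congr h1

/-- Legal windows occur in all high iterates. -/
theorem Leg.occ (hprim : IsPrimitive hℓ θ) {z : ℤ → A} {a b : ℤ} (h : Leg hℓ θ z a b) :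
    ∃ n0 : ℕ, ∀ N, n0 ≤ N → ∀ w : ℤ → A, ∃ i : ℤ, ∀ q, a ≤ q → q < b →
      0 ≤ q + i ∧ q + i < (ℓ : ℤ) ^ N ∧ z q = sI hℓ θ N w (q + i) := by
  obtain ⟨m, _, hm⟩ := hprim
  obtain ⟨n, c, i, hi⟩ := h
  have hl : (1:ℤ) ≤ (ℓ : ℤ) := by exact_mod_cast hℓ
  refine ⟨n + m, fun N hN w => ?_⟩
  obtain ⟨e, rfl⟩ := Nat.exists_eq_add_of_le hN
  obtain ⟨j, hj0, hj1, hj2⟩ := hm (sI hℓ θ e w 0) c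
  have hj3 : sI hℓ θ m (sI hℓ θ e w) j = c := by
    rw [← hj2]
    have := sI_loc0 hℓ θ m (sI hℓ θ e w) (fun _ => sI hℓ θ e w 0) 0 j hj0 hj1 rfl
    simp only [mul_zero, zero_add] at this
    exact this
  refine ⟨(ℓ : ℤ) ^ n * j + i, fun q h1 h2 => ?_⟩
  obtain ⟨h3, h4, h5⟩ := hi q h1 h2
  have hp : (0:ℤ) < (ℓ : ℤ) ^ n := by positivity
  have e1 : q + ((ℓ : ℤ) ^ n * j + i) = (ℓ : ℤ) ^ n * j + (q + i) := by ring
  rw [e1]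
  refine ⟨by positivity, ?_, ?_⟩
  · have h6 : (ℓ : ℤ) ^ n * (j + 1) ≤ (ℓ : ℤ) ^ n * (ℓ : ℤ) ^ m :=
      mul_le_mul_of_nonneg_left hj1 hp.le
    have h7 : (ℓ : ℤ) ^ (n + m) ≤ (ℓ : ℤ) ^ (n + m + e) := pow_le_pow_right₀ hl (by omega)
    rw [← pow_add] at h6
    nlinarith
  · rw [h5, sI_add, sI_add]
    exact (sI_loc0 hℓ θ n _ (fun _ => c) j (q + i) h3 h4 hj3).symm

theorem LY_desubst [Finite A] {y : ℤ → A} (hy : y ∈ LY hℓ θ) :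
    ∃ κ : ℤ, 0 ≤ κ ∧ κ < ℓ ∧ ∃ w ∈ LY hℓ θ, y = shf κ (substApply hℓ θ w) := by
  have hl : (0:ℤ) < (ℓ : ℤ) := by exact_mod_cast hℓ
  have step : ∀ N : ℕ, ∃ (κ : ℤ) (w : ℤ → A), (0 ≤ κ ∧ κ < ℓ) ∧
      (∀ q, -(N:ℤ) ≤ q → q ≤ N → y q = shf κ (substApply hℓ θ w) q) ∧
      (∀ a b : ℤ, ℓ * (-a) + ℓ ≤ N → ℓ * b + ℓ ≤ N → Leg hℓ θ w a b) := by
    intro N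
    obtain ⟨n, c, i, hi⟩ := hy (-N - 1) (N + 1)
    have hn : n ≠ 0 := by
      rintro rfl
      have h1 := hi (-1) (by omega) (by omega)
      have h2 := hi 0 (by omega) (by omega)
      simp only [pow_zero] at h1 h2
      omega
    obtain ⟨n', rfl⟩ := Nat.exists_eq_succ_of_ne_zero hn
    have e := Int.mul_ediv_add_emod i ℓ
    have e1 := Int.emod_nonneg i hl.ne'
    have e2 := Int.emod_lt_of_pos i hl
    refine ⟨i % ℓ, shf (i / ℓ) (sI hℓ θ n' (fun _ => c)), ⟨e1, e2⟩, ?_, ?_⟩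
    · intro q h1 h2
      rw [subst_shf, shf_shf, add_comm, e, (hi q (by omega) (by omega)).2.2, sI_succ]
      rfl
    · intro a b ha hb
      refine ⟨n', c, i / ℓ, fun q h1 h2 => ?_⟩
      have hlo := (hi (-N - 1) (by omega) (by omega)).1
      have hup := (hi N (by omega) (by omega)).2.1
      rw [Nat.succ_eq_add_one, pow_succ] at hup
      have h3 : (ℓ:ℤ) * a ≤ ℓ * q := mul_le_mul_of_nonneg_left h1 hl.le
      have h4 : (ℓ:ℤ) * q ≤ ℓ * b := mul_le_mul_of_nonneg_left h2.le hl.le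
      refine ⟨?_, ?_, rfl⟩
      · by_contra hneg
        push Not at hneg
        have : (ℓ:ℤ) * (q + i / ℓ) ≤ 0 := mul_nonpos_of_nonneg_of_nonpos hl.le hneg.le
        nlinarith
      · by_contra hneg
        push Not at hneg
        have : (ℓ:ℤ) * (ℓ:ℤ) ^ n' ≤ (ℓ:ℤ) * (q + i / ℓ) := mul_le_mul_of_nonneg_left hneg hl.le
        nlinarith
  choose κ w hκ hw1 hw2 using step
  obtain ⟨k, hk0, hk1, hk⟩ := hyper_const κ ℓ hκ
  obtain ⟨v, hv⟩ := ulim_exists w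
  refine ⟨k, hk0, hk1, v, LY_ulim hv ?_, ?_⟩
  · intro a b
    filter_upwards [hyper_ge (ℓ * (-a) + ℓ).toNat, hyper_ge (ℓ * b + ℓ).toNat] with N h1 h2
    exact hw2 N a b (by omega) (by omega)
  · funext q
    obtain ⟨N, h1, h2, h3⟩ :=
      (hk.and ((hyper_ge q.natAbs).and (ulim_sI hℓ θ 1 hv (q + k)))).exists
    rw [hw1 N q (by omega) (by omega), h1]
    exact h3

theorem LY_desubst_iter [Finite A] {y : ℤ → A} (hy : y ∈ LY hℓ θ) (n : ℕ) :
    ∃ κ : ℤ, 0 ≤ κ ∧ κ < (ℓ : ℤ) ^ n ∧ ∃ w ∈ LY hℓ θ, y = shf κ (sI hℓ θ n w) := by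
  induction n with
  | zero => exact ⟨0, le_rfl, by simp, y, hy, by rw [shf_zero]; rfl⟩
  | succ n ih =>
    obtain ⟨κ, h0, h1, w, hw, rfl⟩ := ih
    obtain ⟨κ', h0', h1', w', hw', rfl⟩ := LY_desubst hw
    have hp : (0:ℤ) < (ℓ : ℤ) ^ n := by positivity
    refine ⟨κ + (ℓ : ℤ) ^ n * κ', by positivity, ?_, w', hw', ?_⟩
    · have : (ℓ : ℤ) ^ n * (κ' + 1) ≤ (ℓ : ℤ) ^ n * ℓ := mul_le_mul_of_nonneg_left h1' hp.le
      rw [pow_succ]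
      nlinarith
    · rw [sI_shf, shf_shf, sI_add, sI_one]

/-- Minimality. -/
theorem LY_minimal [Finite A] (hprim : IsPrimitive hℓ θ) {y z : ℤ → A} (hy : y ∈ LY hℓ θ) {a b : ℤ}
    (hz : Leg hℓ θ z a b) :
    ∃ k, ∀ q, a ≤ q → q < b → z q = shf k y q := by
  obtain ⟨n0, hn0⟩ := hz.occ hprim
  obtain ⟨κ, h0, h1, w, hw, rfl⟩ := LY_desubst_iter hy n0
  obtain ⟨i, hi⟩ := hn0 n0 le_rfl w
  refine ⟨i - κ, fun q h1 h2 => ?_⟩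
  rw [(hi q h1 h2).2.2, shf_shf]
  simp [shf]

end

section
variable {A : Type*} {ℓ : ℕ} {hℓ : 0 < ℓ} {θ : A → Fin ℓ → A}

theorem sI_per {x₀ : ℤ → A} {p : ℕ} (hper : sI hℓ θ p x₀ = x₀) (n : ℕ) :
    sI hℓ θ (p * n) x₀ = x₀ := by
  induction n with
  | zero => rfl
  | succ n ih => rw [mul_add, mul_one, sI_add, hper, ih]

theorem per_legal {x₀ : ℤ → A} {p : ℕ} (hp : 1 ≤ p) (hper : sI hℓ θ p x₀ = x₀) (h2 : 2 ≤ ℓ)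
    (a b : ℤ) (hab : 0 ≤ a ∨ b ≤ 0) : Leg hℓ θ x₀ a b := by
  obtain ⟨n, hn⟩ : ∃ n, n = a.natAbs + b.natAbs := ⟨_, rfl⟩
  have hbig : n < ℓ ^ (p * n) := by
    calc n < 2 ^ n := Nat.lt_two_pow_self
      _ ≤ ℓ ^ n := Nat.pow_le_pow_left h2 n
      _ ≤ ℓ ^ (p * n) := Nat.pow_le_pow_right hℓ (Nat.le_mul_of_pos_left n hp)
  have hbig' : (n : ℤ) < (ℓ : ℤ) ^ (p * n) := by exact_mod_cast hbig
  rcases hab with h | h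
  · refine ⟨p * n, x₀ 0, 0, fun q h3 h4 => ?_⟩
    rw [add_zero]
    refine ⟨by omega, by omega, ?_⟩
    have := sI_loc0 hℓ θ (p * n) x₀ (fun _ => x₀ 0) 0 q (by omega) (by omega) rfl
    rw [sI_per hper, mul_zero, zero_add] at this
    exact this
  · refine ⟨p * n, x₀ (-1), (ℓ : ℤ) ^ (p * n), fun q h3 h4 => ?_⟩
    refine ⟨by omega, by omega, ?_⟩
    have := sI_loc0 hℓ θ (p * n) x₀ (fun _ => x₀ (-1)) (-1) (q + (ℓ : ℤ) ^ (p * n))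
      (by omega) (by omega) rfl
    rw [sI_per hper] at this
    rw [← this]
    congr 1
    ring

theorem LY_nonempty [Finite A] {x₀ : ℤ → A} {p : ℕ} (hp : 1 ≤ p) (hper : sI hℓ θ p x₀ = x₀)
    (h2 : 2 ≤ ℓ) : ∃ y, y ∈ LY hℓ θ := by
  obtain ⟨w, hw⟩ := ulim_exists (fun N : ℕ => shf (N : ℤ) x₀)
  refine ⟨w, LY_ulim hw fun a b => ?_⟩
  filter_upwards [hyper_ge a.natAbs] with N hN
  exact Leg.shf _ (per_legal hp hper h2 _ _ (by omega))

theorem orbitClosure_iff [TopologicalSpace A] [DiscreteTopology A] (x₀ y : ℤ → A) :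
    y ∈ orbitClosure x₀ ↔ ∀ N : ℕ, ∃ k : ℤ, ∀ q : ℤ, -(N:ℤ) ≤ q → q < N → y q = x₀ (q + k) := by
  unfold orbitClosure
  rw [mem_closure_iff]
  constructor
  · intro h N
    obtain ⟨z, hz1, k, rfl⟩ := h (Set.pi (Finset.Ico (-(N:ℤ)) N : Finset ℤ) (fun q => {y q}))
      (isOpen_set_pi (Finset.finite_toSet _) (fun q _ => isOpen_discrete _))
      (fun q _ => rfl)
    refine ⟨k, fun q h1 h2 => ?_⟩
    exact (hz1 q (Finset.mem_coe.2 (Finset.mem_Ico.2 ⟨h1, h2⟩))).symm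
  · intro h o ho hyo
    obtain ⟨I, u, hu, hI⟩ := isOpen_pi_iff.1 ho y hyo
    obtain ⟨k, hk⟩ := h (I.sup Int.natAbs + 1)
    refine ⟨fun n => x₀ (n + k), hI ?_, k, rfl⟩
    intro q hq
    have := Finset.le_sup (f := Int.natAbs) (Finset.mem_coe.1 hq)
    have h3 := hk q (by omega) (by omega)
    show x₀ (q + k) ∈ u q
    rw [← h3]
    exact (hu q hq).2

theorem LY_sub [TopologicalSpace A] [DiscreteTopology A] (hprim : IsPrimitive hℓ θ)
    {x₀ : ℤ → A} {p : ℕ} (hp : 1 ≤ p) (hper : sI hℓ θ p x₀ = x₀) {y : ℤ → A}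
    (hy : y ∈ LY hℓ θ) : y ∈ orbitClosure x₀ := by
  rw [orbitClosure_iff]
  intro N
  obtain ⟨n0, hn0⟩ := (hy (-N) N).occ hprim
  obtain ⟨i, hi⟩ := hn0 (p * n0) (Nat.le_mul_of_pos_left n0 hp) x₀
  rw [sI_per hper] at hi
  exact ⟨i, fun q h1 h2 => (hi q h1 h2).2.2⟩

theorem orbit_tail [Finite A] [TopologicalSpace A] [DiscreteTopology A] (hprim : IsPrimitive hℓ θ)
    {x₀ : ℤ → A} {p : ℕ} (hp : 1 ≤ p) (hper : sI hℓ θ p x₀ = x₀) (h2 : 2 ≤ ℓ) {x : ℤ → A}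
    (hx : x ∈ orbitClosure x₀) :
    ∃ z ∈ LY hℓ θ, ∃ M : ℕ, ∀ k : ℤ, (M : ℤ) ≤ k → z k = x k := by
  rw [orbitClosure_iff] at hx
  have claim : ∃ M : ℕ, ∀ N : ℕ, Leg hℓ θ x M N := by
    by_cases h : ∀ N : ℕ, Leg hℓ θ x 0 N
    · exact ⟨0, by simpa using h⟩
    · push Not at h
      obtain ⟨N0, hN0⟩ := h
      refine ⟨N0, fun N => ?_⟩
      rcases le_or_gt N N0 with hN | hN
      · exact ⟨0, x 0, 0, fun q h3 h4 => by omega⟩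
      · obtain ⟨k, hk⟩ := hx N
        have hk' : ¬ (0 ≤ 0 + k ∨ (N0:ℤ) + k ≤ 0) := by
          intro hor
          apply hN0
          refine (Leg.shf k (per_legal hp hper h2 _ _ hor)).congr ?_
          intro q h3 h4
          exact (hk q (by omega) (by omega)).symm
        refine (Leg.shf k (per_legal hp hper h2 (N0 + k) (N + k) (by omega))).congr ?_
        intro q h3 h4
        exact (hk q (by omega) (by omega)).symm
  obtain ⟨M, hM⟩ := claim
  obtain ⟨y, hy⟩ := LY_nonempty (hℓ := hℓ) (θ := θ) hp hper h2
  have := fun N : ℕ => LY_minimal hprim hy (hM N)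
  choose k hk using this
  obtain ⟨z, hz⟩ := ulim_exists (fun N => shf (k N) y)
  refine ⟨z, LY_ulim hz fun a b => Eventually.of_forall fun N => LY_shf hy _ a b, M, ?_⟩
  intro q hq
  obtain ⟨N, h3, h4⟩ := ((hz q).and (hyper_ge (q + 1).toNat)).exists
  rw [← h3]
  exact (hk N q hq (by omega)).symm

/-- Coincidence of `θ^n Y` with its shift by `s`. -/
def GG {A : Type*} {ℓ : ℕ} (hℓ : 0 < ℓ) (θ : A → Fin ℓ → A) (n : ℕ) (s : ℤ) : Prop :=
  ∃ x ∈ LY hℓ θ, ∃ x' ∈ LY hℓ θ, sI hℓ θ n x = shf s (sI hℓ θ n x')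

theorem GG_all [Finite A] (hprim : IsPrimitive hℓ θ) {n : ℕ} {s : ℤ} (h : GG hℓ θ n s)
    {x : ℤ → A} (hx : x ∈ LY hℓ θ) :
    ∃ x' ∈ LY hℓ θ, sI hℓ θ n x = shf s (sI hℓ θ n x') := by
  obtain ⟨y, hy, y', hy', e⟩ := h
  have := fun N : ℕ => LY_minimal hprim hy (hx (-N) N)
  choose k hk using this
  obtain ⟨z, hz⟩ := ulim_exists (fun N => shf (k N) y')
  refine ⟨z, LY_ulim hz fun a b => Eventually.of_forall fun N => LY_shf hy' _ a b, ?_⟩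
  funext q
  obtain ⟨N, h3, h4⟩ := ((ulim_sI hℓ θ n hz (q + s)).and
    (hyper_ge ((q / (ℓ:ℤ) ^ n).natAbs + 1))).exists
  show _ = sI hℓ θ n z (q + s)
  rw [← h3, sI_dep hℓ θ n x (shf (k N) y) q (hk N _ (by omega) (by omega)), sI_shf, sI_shf, e]
  simp only [shf]
  congr 1
  ring

theorem GG_lift [Finite A] (hprim : IsPrimitive hℓ θ) {d : ℤ} (h : GG hℓ θ 1 d)
    (hd : ¬ (ℓ : ℤ) ∣ d) (n : ℕ) : ∃ s, GG hℓ θ (n + 1) s ∧ ¬ (ℓ : ℤ) ∣ s := by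
  have h' := h
  obtain ⟨x, hx, _⟩ := h'
  obtain ⟨x', hx', e⟩ := GG_all hprim h (LY_sI hx n)
  obtain ⟨κ, _, _, w, hw, rfl⟩ := LY_desubst_iter hx' n
  refine ⟨d + ℓ * κ, ⟨x, hx, w, hw, ?_⟩, ?_⟩
  · rw [sI_one, sI_one, subst_shf, shf_shf, ← sI_succ, ← sI_succ] at e
    exact e
  · intro hdvd
    exact hd ((Int.dvd_add_left (Dvd.intro κ rfl)).1 hdvd)

theorem arith_lemma {γ ℓ n : ℕ} (hℓ : 0 < ℓ) (hγ : γ ∣ ℓ ^ (n + 1)) (h : ¬ ℓ ∣ γ) :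
    γ * 2 ^ n ≤ ℓ ^ (n + 1) := by
  have hpow : ℓ ^ (n + 1) ≠ 0 := by positivity
  have hγ0 : γ ≠ 0 := by
    rintro rfl
    exact hpow (zero_dvd_iff.1 hγ)
  obtain ⟨κ, hκ⟩ := hγ
  have hκ0 : κ ≠ 0 := by
    rintro rfl
    simp [hℓ.ne'] at hκ
  rw [← Nat.factorization_le_iff_dvd hℓ.ne' hγ0, Finsupp.le_def] at h
  push Not at h
  obtain ⟨q, hq⟩ := h
  have hqp : q.Prime := by
    by_contra hnp
    rw [Nat.factorization_eq_zero_of_not_prime ℓ hnp] at hq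
    omega
  have hf := congrArg (fun t => Nat.factorization t q) hκ
  simp only [Nat.factorization_pow, Nat.factorization_mul hγ0 hκ0, Finsupp.add_apply,
    Finsupp.smul_apply, smul_eq_mul] at hf
  have h1 : n ≤ κ.factorization q := by
    have : 1 ≤ ℓ.factorization q := by omega
    nlinarith
  have h2 : q ^ n ∣ κ := (hqp.pow_dvd_iff_le_factorization hκ0).2 h1
  have h3 : 2 ^ n ≤ κ := (Nat.pow_le_pow_left hqp.two_le n).trans
    (Nat.le_of_dvd (Nat.pos_of_ne_zero hκ0) h2)
  rw [hκ]
  exact Nat.mul_le_mul_left _ h3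

theorem GG_gen [Finite A] (hprim : IsPrimitive hℓ θ) {d : ℤ} (h : GG hℓ θ 1 d)
    (hd : ¬ (ℓ : ℤ) ∣ d) (n : ℕ) :
    ∃ γ : ℕ, 0 < γ ∧ γ * 2 ^ n ≤ ℓ ^ (n + 1) ∧ ∀ k : ℤ, GG hℓ θ (n + 1) (γ * k) := by
  obtain ⟨s, hs, hsd⟩ := GG_lift hprim h hd n
  obtain ⟨x, hx, _⟩ := h
  let H : AddSubgroup ℤ :=
    { carrier := {s | GG hℓ θ (n + 1) s}
      zero_mem' := ⟨x, hx, x, hx, by rw [shf_zero]⟩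
      add_mem' := by
        rintro s t ⟨y, hy, y', hy', e⟩ ht
        obtain ⟨z, hz, e'⟩ := GG_all hprim ht hy'
        exact ⟨y, hy, z, hz, by rw [e, e', shf_shf]⟩
      neg_mem' := by
        rintro s ⟨y, hy, y', hy', e⟩
        exact ⟨y', hy', y, hy, by rw [e, shf_shf, neg_add_cancel, shf_zero]⟩ }
  obtain ⟨a, ha⟩ := Int.subgroup_cyclic H
  have hmem : ∀ t, GG hℓ θ (n + 1) t ↔ a ∣ t := by
    intro t
    have : GG hℓ θ (n + 1) t ↔ t ∈ H := Iff.rfl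
    rw [this, ha, ← AddSubgroup.zmultiples_eq_closure, Int.mem_zmultiples_iff]
  have hpow : a ∣ (ℓ : ℤ) ^ (n + 1) := by
    rw [← hmem]
    refine ⟨shf 1 x, LY_shf hx 1, x, hx, ?_⟩
    rw [sI_shf, mul_one]
  have hpow' : a.natAbs ∣ ℓ ^ (n + 1) := by
    have := Int.natAbs_dvd_natAbs.2 hpow
    rwa [Int.natAbs_pow, Int.natAbs_natCast] at this
  refine ⟨a.natAbs, Nat.pos_of_dvd_of_pos hpow' (by positivity), arith_lemma hℓ hpow' ?_, ?_⟩
  · intro hdvd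
    exact hsd ((Int.natCast_dvd.2 hdvd).trans ((hmem s).1 hs))
  · intro k
    rw [hmem]
    exact (Int.dvd_natAbs.2 dvd_rfl).trans (Dvd.intro k rfl)

end

section
variable {A : Type*} {ℓ : ℕ} {hℓ : 0 < ℓ} {θ : A → Fin ℓ → A}

/-- All legal pairs occur in `θ^N` of anything, for a uniform `N`. -/
theorem pairs_uniform [Finite A] (hprim : IsPrimitive hℓ θ) :
    ∃ N : ℕ, ∀ z ∈ LY hℓ θ, ∀ q : ℤ, ∀ w : ℤ → A, ∃ j : ℤ, 0 ≤ j ∧ j + 1 < (ℓ : ℤ) ^ N ∧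
      sI hℓ θ N w j = z q ∧ sI hℓ θ N w (j + 1) = z (q + 1) := by
  have h : ∀ᶠ N : ℕ in atTop, ∀ ab : A × A, ∀ z ∈ LY hℓ θ, ∀ q : ℤ,
      (z q, z (q + 1)) = ab → ∀ w : ℤ → A, ∃ j : ℤ, 0 ≤ j ∧ j + 1 < (ℓ : ℤ) ^ N ∧
      sI hℓ θ N w j = z q ∧ sI hℓ θ N w (j + 1) = z (q + 1) := by
    rw [Filter.eventually_all]
    intro ab
    by_cases hex : ∃ z ∈ LY hℓ θ, ∃ q : ℤ, (z q, z (q + 1)) = ab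
    · obtain ⟨z, hz, q, rfl⟩ := hex
      obtain ⟨n0, hn0⟩ := (hz q (q + 2)).occ hprim
      filter_upwards [eventually_ge_atTop n0] with N hN z' hz' q' e w
      obtain ⟨i, hi⟩ := hn0 N hN w
      obtain ⟨h1, h2, h3⟩ := hi q (by omega) (by omega)
      obtain ⟨h4, h5, h6⟩ := hi (q + 1) (by omega) (by omega)
      have e1 := (Prod.ext_iff.1 e).1
      have e2 := (Prod.ext_iff.1 e).2
      simp only at e1 e2
      have e3 : q + 1 + i = q + i + 1 := by ring
      rw [e3] at h5 h6
      exact ⟨q + i, h1, h5, by rw [e1, h3], by rw [e2, h6]⟩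
    · refine Eventually.of_forall fun N z hz q e => ?_
      exact absurd ⟨z, hz, q, e⟩ hex
  obtain ⟨N, hN⟩ := h.exists
  exact ⟨N, fun z hz q w => hN _ z hz q rfl w⟩

/-- A long window with a short period forces global periodicity. -/
theorem periodic_of_window [Finite A] {N : ℕ}
    (hN : ∀ z ∈ LY hℓ θ, ∀ q : ℤ, ∀ w : ℤ → A, ∃ j : ℤ, 0 ≤ j ∧ j + 1 < (ℓ : ℤ) ^ N ∧
      sI hℓ θ N w j = z q ∧ sI hℓ θ N w (j + 1) = z (q + 1))
    {y : ℤ → A} (hy : y ∈ LY hℓ θ) (a L : ℤ) (t j : ℕ) (ht : t < ℓ ^ j)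
    (hL : 2 * (ℓ : ℤ) ^ (j + N) ≤ L) (hper : ∀ r, a ≤ r → r < a + L → y (r + t) = y r) :
    ∀ z ∈ LY hℓ θ, ∀ k, z (k + t) = z k := by
  intro z hz k
  have hp : (0:ℤ) < (ℓ : ℤ) ^ j := by positivity
  have hP : (0:ℤ) < (ℓ : ℤ) ^ (j + N) := by positivity
  have ht' : (t : ℤ) < (ℓ : ℤ) ^ j := by exact_mod_cast ht
  obtain ⟨i, _, _, x, hx, rfl⟩ := LY_desubst_iter hz j
  obtain ⟨i', _, _, x', hx', rfl⟩ := LY_desubst_iter hy (j + N)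
  obtain ⟨q, hq⟩ : ∃ q, q = (k + i) / (ℓ : ℤ) ^ j := ⟨_, rfl⟩
  obtain ⟨s, hs⟩ : ∃ s, s = (k + i) % (ℓ : ℤ) ^ j := ⟨_, rfl⟩
  have e := Int.mul_ediv_add_emod (k + i) ((ℓ : ℤ) ^ j)
  have hs0 := Int.emod_nonneg (k + i) hp.ne'
  have hs1 := Int.emod_lt_of_pos (k + i) hp
  rw [← hq, ← hs] at e
  rw [← hs] at hs0 hs1
  -- choose the block
  obtain ⟨B, hB⟩ : ∃ B, B = (a + i') / (ℓ : ℤ) ^ (j + N) + 1 := ⟨_, rfl⟩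
  have f := Int.mul_ediv_add_emod (a + i') ((ℓ : ℤ) ^ (j + N))
  have f0 := Int.emod_nonneg (a + i') hP.ne'
  have f1 := Int.emod_lt_of_pos (a + i') hP
  have fB : (ℓ : ℤ) ^ (j + N) * B = (ℓ : ℤ) ^ (j + N) * ((a + i') / (ℓ : ℤ) ^ (j + N)) +
      (ℓ : ℤ) ^ (j + N) := by rw [hB]; ring
  obtain ⟨J, hJ0, hJ1, hJ2, hJ3⟩ := hN x hx q (shf B x')
  have key : ∀ u : ℤ, 0 ≤ u → u < 2 * (ℓ : ℤ) ^ j →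
      sI hℓ θ (j + N) x' ((ℓ : ℤ) ^ (j + N) * B + (ℓ : ℤ) ^ j * J + u) =
        sI hℓ θ j x ((ℓ : ℤ) ^ j * q + u) := by
    intro u hu0 hu1
    have h1 : sI hℓ θ (j + N) x' ((ℓ : ℤ) ^ (j + N) * B + (ℓ : ℤ) ^ j * J + u) =
        sI hℓ θ j (sI hℓ θ N (shf B x')) ((ℓ : ℤ) ^ j * J + u) := by
      rw [← sI_add, sI_shf]
      simp only [shf]
      congr 1
      ring
    rw [h1]
    rcases lt_or_ge u ((ℓ : ℤ) ^ j) with h | h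
    · exact sI_loc hℓ θ j _ _ J q u hu0 h hJ2
    · have := sI_loc hℓ θ j _ _ (J + 1) (q + 1) (u - (ℓ : ℤ) ^ j) (by omega) (by omega) hJ3
      have e1 : ∀ v : ℤ, (ℓ : ℤ) ^ j * (v + 1) + (u - (ℓ : ℤ) ^ j) = (ℓ : ℤ) ^ j * v + u :=
        fun v => by ring
      rwa [e1, e1] at this
  have k1 := key s hs0 (by omega)
  have k2 := key (s + t) (by omega) (by omega)
  have hJb : (ℓ : ℤ) ^ j * J + (ℓ : ℤ) ^ j ≤ (ℓ : ℤ) ^ (j + N) := by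
    have : (ℓ : ℤ) ^ j * (J + 1) ≤ (ℓ : ℤ) ^ j * (ℓ : ℤ) ^ N :=
      mul_le_mul_of_nonneg_left (by omega) hp.le
    rw [← pow_add] at this
    linarith
  have hJc : 0 ≤ (ℓ : ℤ) ^ j * J := by positivity
  have h := hper ((ℓ : ℤ) ^ (j + N) * B + (ℓ : ℤ) ^ j * J + s - i') (by omega) (by omega)
  simp only [shf] at h ⊢
  rw [show (ℓ : ℤ) ^ (j + N) * B + (ℓ : ℤ) ^ j * J + s - i' + t + i' =
      (ℓ : ℤ) ^ (j + N) * B + (ℓ : ℤ) ^ j * J + (s + t) by ring,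
    show (ℓ : ℤ) ^ (j + N) * B + (ℓ : ℤ) ^ j * J + s - i' + i' =
      (ℓ : ℤ) ^ (j + N) * B + (ℓ : ℤ) ^ j * J + s by ring, k1, k2] at h
  rw [show k + t + i = (ℓ : ℤ) ^ j * q + (s + t) by linarith,
    show k + i = (ℓ : ℤ) ^ j * q + s by linarith]
  exact h

theorem periodic_of_GG [Fintype A] (hprim : IsPrimitive hℓ θ) (h2 : 2 ≤ ℓ) {d : ℤ}
    (h : GG hℓ θ 1 d) (hd : ¬ (ℓ : ℤ) ∣ d) :
    ∃ t : ℕ, 0 < t ∧ ∀ z ∈ LY hℓ θ, ∀ k, z (k + t) = z k := by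
  obtain ⟨N, hN⟩ := pairs_uniform hprim
  obtain ⟨j, hj⟩ : ∃ j, j = Fintype.card A * ℓ ^ (N + 1) := ⟨_, rfl⟩
  obtain ⟨γ, hγ0, hγ1, hγ⟩ := GG_gen hprim h hd (j + N)
  obtain ⟨x, hx, _⟩ := h
  have := fun k : ℤ => GG_all hprim (hγ k) hx
  choose X hX hXe using this
  -- pigeonhole
  obtain ⟨k, k', hne, hkk⟩ := Fintype.exists_ne_map_eq_of_card_lt
    (fun k : Fin (Fintype.card A + 1) => X (k : ℕ) 0) (by simp)
  wlog hlt : k < k' generalizing k k'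
  · exact this k' k hne.symm hkk.symm (lt_of_le_of_ne (not_lt.1 hlt) hne.symm)
  have hlt' : (k : ℕ) < k' := hlt
  have hk'A : (k' : ℕ) ≤ Fintype.card A := by have := k'.2; omega
  have hv : ∀ κ : ℤ, ∀ p : ℤ, sI hℓ θ (j + N + 1) x (p - γ * κ) =
      sI hℓ θ (j + N + 1) (X κ) p := by
    intro κ p
    rw [hXe κ]
    simp [shf]
  refine ⟨γ * (k' - k), Nat.mul_pos hγ0 (by omega), ?_⟩
  have hcast : ((γ * (k' - k) : ℕ) : ℤ) = γ * (k' : ℕ) - γ * (k : ℕ) := by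
    push_cast [Nat.cast_sub hlt'.le]
    ring
  apply periodic_of_window hN (LY_sI hx (j + N + 1)) (-(γ * (k' : ℕ))) ((ℓ : ℤ) ^ (j + N + 1))
    (γ * (k' - k)) j
  · have h3 : γ * (k' - k) ≤ γ * Fintype.card A := Nat.mul_le_mul_left _ (by omega)
    refine lt_of_le_of_lt h3 ?_
    have h4 : j < 2 ^ (j + N) :=
      lt_of_lt_of_le Nat.lt_two_pow_self (Nat.pow_le_pow_right (by norm_num) (by omega))
    have h5 : (γ * Fintype.card A) * 2 ^ (j + N) < ℓ ^ j * 2 ^ (j + N) := by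
      calc (γ * Fintype.card A) * 2 ^ (j + N) = (γ * 2 ^ (j + N)) * Fintype.card A := by ring
        _ ≤ ℓ ^ (j + N + 1) * Fintype.card A := Nat.mul_le_mul_right _ hγ1
        _ = ℓ ^ j * j := by
          have e5 : ℓ ^ (j + N + 1) * Fintype.card A = ℓ ^ j * (Fintype.card A * ℓ ^ (N + 1)) := by
            ring
          rw [e5, ← hj]
        _ < ℓ ^ j * 2 ^ (j + N) := Nat.mul_lt_mul_of_pos_left h4 (by positivity)
    exact lt_of_mul_lt_mul_right h5 (by positivity)
  · rw [pow_succ (ℓ : ℤ) (j + N), mul_comm]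
    have : (2:ℤ) ≤ ℓ := by exact_mod_cast h2
    exact mul_le_mul_of_nonneg_left this (by positivity)
  · intro r hr0 hr1
    have a1 := hv (k' : ℕ) (r + γ * (k' : ℕ))
    have a2 := hv (k : ℕ) (r + γ * (k' : ℕ))
    have a3 := sI_loc hℓ θ (j + N + 1) (X (k : ℕ)) (X (k' : ℕ)) 0 0 (r + γ * (k' : ℕ))
      (by linarith) (by linarith) hkk
    rw [mul_zero, zero_add] at a3
    rw [hcast, show r + ((γ:ℤ) * (k' : ℕ) - γ * (k : ℕ)) = r + γ * (k' : ℕ) - γ * (k : ℕ) by ring,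
      a2, a3, ← a1]
    congr 1
    ring

/-- Periodicity of all legal points implies finiteness of the orbit closure. -/
theorem not_periodic [Finite A] [TopologicalSpace A] [DiscreteTopology A]
    (hprim : IsPrimitive hℓ θ) (hc : 0 < cMin θ)
    {x₀ : ℤ → A} {p : ℕ} (hp : 1 ≤ p) (hper : sI hℓ θ p x₀ = x₀) (h2 : 2 ≤ ℓ)
    (hinf : (orbitClosure x₀).Infinite) (t : ℕ) (ht : 0 < t)
    (h : ∀ z ∈ LY hℓ θ, ∀ k, z (k + t) = z k) : False := by
  obtain ⟨y, hy⟩ := LY_nonempty (hℓ := hℓ) (θ := θ) hp hper h2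
  have hl' : (0:ℝ) < ℓ := by exact_mod_cast hℓ
  have hr : ((ℓ - cMin θ : ℕ) : ℝ) / ℓ < 1 := by
    rw [div_lt_one hl']
    exact_mod_cast Nat.sub_lt hℓ hc
  obtain ⟨n, hn⟩ := exists_pow_lt_of_lt_one (show (0:ℝ) < 1 / t by positivity) hr
  have hmul : ∀ z ∈ LY hℓ θ, ∀ (m : ℕ) (k : ℤ), z (k + t * m) = z k := by
    intro z hz m
    induction m with
    | zero => simp
    | succ m ih =>
      intro k
      rw [show k + (t:ℤ) * ((m + 1 : ℕ) : ℤ) = k + t * m + t by push_cast; ring, h z hz, ih]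
  have hmulZ : ∀ z ∈ LY hℓ θ, ∀ (m : ℤ) (k : ℤ), z (k + t * m) = z k := by
    intro z hz m k
    obtain ⟨a, rfl | rfl⟩ := m.eq_nat_or_neg
    · exact hmul z hz a k
    · have := hmul z hz a (k + t * (-a))
      rw [show k + (t:ℤ) * (-a) + t * a = k by ring] at this
      exact this.symm
  have hlper : ∀ z ∈ LY hℓ θ, ∀ q, z (q + (ℓ:ℤ) ^ n) = z q := by
    intro z hz q
    by_contra hne
    have hD : 1 / (t:ℝ) ≤ besD1 (shf ((ℓ:ℤ) ^ n) z) z := by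
      apply besD1_ge _ _ t ht
      intro k
      have htz : (0:ℤ) < t := by exact_mod_cast ht
      have e := Int.mul_ediv_add_emod (q - k) t
      have e0 := Int.emod_nonneg (q - k) htz.ne'
      have e1 := Int.emod_lt_of_pos (q - k) htz
      refine ⟨k + ((q - k) % t).toNat, by omega, by omega, ?_⟩
      have e2 : ((k + ((q - k) % t).toNat : ℕ) : ℤ) = q + t * (-((q - k) / t)) := by
        push_cast
        rw [Int.toNat_of_nonneg e0]
        linarith
      rw [e2, hmulZ z hz]
      simp only [shf]
      rw [show q + (t:ℤ) * (-((q - k) / t)) + (ℓ:ℤ) ^ n = q + (ℓ:ℤ) ^ n + t * (-((q - k) / t)) by ring,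
        hmulZ z hz]
      exact hne
    obtain ⟨κ, hκ0, hκ1, w, hw, e⟩ := LY_desubst_iter hz n
    obtain ⟨κ', rfl⟩ := Int.eq_ofNat_of_zero_le hκ0
    have e3 : shf ((ℓ:ℤ) ^ n) z = shf (κ' : ℤ) (sI hℓ θ n (shf 1 w)) := by
      rw [e, sI_shf, shf_shf, shf_shf, mul_one, add_comm]
    have : besD1 (shf ((ℓ:ℤ) ^ n) z) z ≤ (((ℓ - cMin θ : ℕ) : ℝ) / ℓ) ^ n := by
      rw [e3]
      conv_lhs => rw [e]
      rw [besD1_shf]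
      exact besD1_sI hℓ θ n _ _
    linarith
  have hP : (0:ℤ) < (ℓ:ℤ) ^ n := by positivity
  -- all words `θ^n(a)` coincide
  have hlmul : ∀ (m : ℕ) (z : ℤ → A), z ∈ LY hℓ θ → ∀ q, z (q + (ℓ:ℤ) ^ n * m) = z q := by
    intro m z hz
    induction m with
    | zero => simp
    | succ m ih =>
      intro q
      rw [show q + (ℓ:ℤ) ^ n * ((m + 1 : ℕ) : ℤ) = q + (ℓ:ℤ) ^ n * m + (ℓ:ℤ) ^ n by push_cast; ring,
        hlper z hz, ih]
  have hlmulZ : ∀ (z : ℤ → A), z ∈ LY hℓ θ → ∀ (m : ℤ) q, z ((ℓ:ℤ) ^ n * m + q) = z q := by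
    intro z hz m q
    rw [add_comm]
    obtain ⟨a, rfl | rfl⟩ := m.eq_nat_or_neg
    · exact hlmul a z hz q
    · have := hlmul a z hz (q + (ℓ:ℤ) ^ n * (-a))
      rw [show q + (ℓ:ℤ) ^ n * (-a) + (ℓ:ℤ) ^ n * a = q by ring] at this
      exact this.symm
  have hall : ∀ w : ℤ → A, ∀ k j : ℤ, 0 ≤ j → j < (ℓ:ℤ) ^ n →
      sI hℓ θ n w ((ℓ:ℤ) ^ n * k + j) = sI hℓ θ n y j := by
    intro w k j hj0 hj1
    have hleg : Leg hℓ θ (fun _ => w k) 0 1 := ⟨0, w k, 0, fun q h3 h4 => by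
      refine ⟨by omega, by simp; omega, rfl⟩⟩
    obtain ⟨i, hi⟩ := LY_minimal hprim hy hleg
    have hi0 := hi 0 le_rfl (by norm_num)
    simp only [shf, zero_add] at hi0
    rw [sI_loc hℓ θ n w y k i j hj0 hj1 hi0, hlmulZ _ (LY_sI hy n)]
  have hx : ∀ k j : ℤ, 0 ≤ j → j < (ℓ:ℤ) ^ n → x₀ ((ℓ:ℤ) ^ n * k + j) = sI hℓ θ n y j := by
    intro k j hj0 hj1
    have hle : n ≤ p * n := Nat.le_mul_of_pos_left n hp
    obtain ⟨e, he⟩ := Nat.exists_eq_add_of_le hle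
    have h5 := hall (sI hℓ θ e x₀) k j hj0 hj1
    rw [← sI_add, ← he, sI_per hper] at h5
    exact h5
  apply hinf
  have hfin : {z : ℤ → A | ∃ k : ℤ, z = fun m => x₀ (m + k)}.Finite := by
    apply ((Set.finite_Ico (0:ℤ) ((ℓ:ℤ) ^ n)).image (fun k => fun m => x₀ (m + k))).subset
    rintro z ⟨k, rfl⟩
    refine ⟨k % (ℓ:ℤ) ^ n, ⟨Int.emod_nonneg _ hP.ne', Int.emod_lt_of_pos _ hP⟩, ?_⟩
    have hxper : ∀ (m q : ℤ), x₀ ((ℓ:ℤ) ^ n * m + q) = x₀ q := by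
      intro m q
      have e := Int.mul_ediv_add_emod q ((ℓ:ℤ) ^ n)
      have e0 := Int.emod_nonneg q hP.ne'
      have e1 := Int.emod_lt_of_pos q hP
      have a1 := hx (m + q / (ℓ:ℤ) ^ n) _ e0 e1
      have a2 := hx (q / (ℓ:ℤ) ^ n) _ e0 e1
      rw [e] at a2
      rw [a2, ← a1]
      congr 1
      rw [mul_add]
      linarith
    funext m
    have := hxper (k / (ℓ:ℤ) ^ n) (m + k % (ℓ:ℤ) ^ n)
    show x₀ (m + k % (ℓ:ℤ) ^ n) = x₀ (m + k)
    rw [← this]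
    congr 1
    have e := Int.mul_ediv_add_emod k ((ℓ:ℤ) ^ n)
    linarith
  unfold orbitClosure
  rw [hfin.isClosed.closure_eq]
  exact hfin

end

section
variable {A : Type*} {ℓ : ℕ} {hℓ : 0 < ℓ} {θ : A → Fin ℓ → A}

theorem two_le_of_cMin (hprim : IsPrimitive hℓ θ) (hc : 0 < cMin θ) : 2 ≤ ℓ := by
  by_contra hlt
  have h1 : ℓ = 1 := by omega
  subst h1
  have hne : {n : ℕ | ∃ a b : A, a ≠ b ∧ coincCount θ a b = n}.Nonempty := by
    by_contra h
    rw [Set.not_nonempty_iff_eq_empty] at h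
    unfold cMin at hc
    rw [h] at hc
    simp at hc
  obtain ⟨_, a, b, hab, _⟩ := hne
  obtain ⟨m, _, hm⟩ := hprim
  obtain ⟨j, h0, h1, h2⟩ := hm a a
  obtain ⟨j', h0', h1', h2'⟩ := hm a b
  have e1 : j = 0 := by simp at h1; omega
  have e2 : j' = 0 := by simp at h1'; omega
  subst e1
  subst e2
  exact hab (h2.symm.trans h2')

theorem GG_of_zero [Finite A] {x y : ℤ → A} (hx : x ∈ LY hℓ θ) (hy : y ∈ LY hℓ θ) (i j : ℕ)
    (h : besD1 (shf i (substApply hℓ θ x)) (shf j (substApply hℓ θ y)) = 0) :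
    GG hℓ θ 1 ((j : ℤ) - i) := by
  have hl : (0:ℤ) < (ℓ : ℤ) := by exact_mod_cast hℓ
  have hwin : ∀ N : ℕ, ∃ k : ℕ, ∀ m : ℕ, k ≤ m → m < k + (2 * N + 1) →
      shf i (substApply hℓ θ x) (m : ℤ) = shf j (substApply hℓ θ y) (m : ℤ) := by
    intro N
    by_contra hcon
    push Not at hcon
    have := besD1_ge _ _ (2 * N + 1) (by omega) hcon
    rw [h] at this
    have h3 : (0:ℝ) < 1 / ((2 * N + 1 : ℕ) : ℝ) := by positivity
    linarith
  choose K hK using hwin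
  obtain ⟨κ, hκ0, hκ1, hκ⟩ := hyper_const (fun N => ((K N + N : ℕ) : ℤ) % ℓ) ℓ
    (fun N => ⟨Int.emod_nonneg _ hl.ne', Int.emod_lt_of_pos _ hl⟩)
  obtain ⟨X, hX⟩ := ulim_exists (fun N => shf (((K N + N : ℕ) : ℤ) / ℓ) x)
  obtain ⟨Y, hY⟩ := ulim_exists (fun N => shf (((K N + N : ℕ) : ℤ) / ℓ) y)
  refine ⟨X, LY_ulim hX fun a b => Eventually.of_forall fun N => LY_shf hx _ a b,
    Y, LY_ulim hY fun a b => Eventually.of_forall fun N => LY_shf hy _ a b, ?_⟩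
  funext q
  have e1 := ulim_sI hℓ θ 1 hX q
  have e2 := ulim_sI hℓ θ 1 hY (q + (j - i))
  obtain ⟨N, h1, h2, h3, h4⟩ := (e1.and (e2.and (hκ.and
    (hyper_ge ((q - i - κ).natAbs))))).exists
  show sI hℓ θ 1 X q = sI hℓ θ 1 Y (q + (j - i))
  rw [← h1, ← h2, sI_shf, sI_shf, sI_one, sI_one, pow_one]
  have hd := Int.mul_ediv_add_emod ((K N + N : ℕ) : ℤ) ℓ
  rw [h3] at hd
  obtain ⟨m, hm⟩ : ∃ m : ℕ, (m : ℤ) = q - i - κ + (K N + N : ℕ) :=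
    ⟨(q - i - κ + (K N + N : ℕ)).toNat, by
      rw [Int.toNat_of_nonneg]; push_cast; omega⟩
  have hh := hK N m (by push_cast at hm; omega) (by push_cast at hm; omega)
  unfold shf at hh ⊢
  have t1 : q + (ℓ : ℤ) * (((K N + N : ℕ) : ℤ) / ℓ) = m + i := by linarith
  have t2 : q + ((j : ℤ) - i) + (ℓ : ℤ) * (((K N + N : ℕ) : ℤ) / ℓ) = m + j := by linarith
  rw [t1, t2]
  exact hh

theorem subst_tail {x x' : ℤ → A} {M : ℕ} (h : ∀ k : ℤ, (M : ℤ) ≤ k → x' k = x k) (i : ℕ)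
    (k : ℕ) (hk : ℓ * M ≤ k) :
    shf i (substApply hℓ θ x') (k : ℤ) = shf i (substApply hℓ θ x) (k : ℤ) := by
  have hl : (0:ℤ) < (ℓ : ℤ) := by exact_mod_cast hℓ
  apply subst_congr _ _ _ _ _ _ _ rfl
  apply h
  rw [Int.le_ediv_iff_mul_le hl]
  have : (ℓ : ℤ) * M ≤ k := by exact_mod_cast hk
  have : (0:ℤ) ≤ (i:ℤ) := by positivity
  linarith

theorem ulim_close [Finite A] {v : ℕ → ℤ → A} (hv : ∀ k, v k ∈ LY hℓ θ) {z : ℤ → A}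
    (hz : ∀ q, ∀ᶠ N in (hyperfilter ℕ : Filter ℕ), v N q = z q) (n : ℕ) :
    ∀ᶠ N in (hyperfilter ℕ : Filter ℕ), besD1 (v N) z ≤ (((ℓ - cMin θ : ℕ) : ℝ) / ℓ) ^ n := by
  choose κ h0 h1 w hw he using fun k => LY_desubst_iter (hv k) n
  obtain ⟨c, hc0, hc1, hc⟩ := hyper_const κ _ (fun N => ⟨h0 N, h1 N⟩)
  obtain ⟨W, hW⟩ := ulim_exists w
  have hzW : z = shf c (sI hℓ θ n W) := by
    funext q
    obtain ⟨N, a1, a2, a3⟩ := ((hz q).and (hc.and (ulim_sI hℓ θ n hW (q + c)))).exists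
    rw [← a1, he N, a2]
    exact a3
  filter_upwards [hc] with N hN
  rw [he N, hN, hzW]
  lift c to ℕ using hc0
  rw [besD1_shf]
  exact besD1_sI hℓ θ n _ _

end

/-- If `X_θ` is infinite, has discrete spectrum and `c(θ) > 0`, then
`{σ^i ∘ θ}_{0 ≤ i < ℓ}` is an iterated function system on the Besicovitch space
`([Σ],D_1)` (all maps are contractions), the set `[X_θ]` is compact (sequentially
compact with respect to `D_1`), the images `(σ^i∘θ)([X_θ])` are pairwise disjoint,
and `[X_θ] = ⋃_{i<ℓ} (σ^i∘θ)([X_θ])`: the IFS satisfies the strong separation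
condition and its attractor is `[X_θ]`. -/
theorem substitution_IFS_strong_separation_attractor
    {A : Type} [Fintype A] [TopologicalSpace A] [DiscreteTopology A]
    [MeasurableSpace A] [MeasurableSingletonClass A]
    {ℓ : ℕ} (hℓ : 0 < ℓ) (θ : A → Fin ℓ → A) (hprim : IsPrimitive hℓ θ)
    (x₀ : ℤ → A) (p : ℕ) (hp : 1 ≤ p) (hper : (substApply hℓ θ)^[p] x₀ = x₀)
    (hinf : (orbitClosure x₀).Infinite)
    (hds : HasDiscreteSpectrum (orbitClosure x₀))
    (hc : 0 < cMin θ) :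
    (∀ i < ℓ, ∃ r : ℝ, r < 1 ∧ ∀ x y : ℤ → A,
        besD1 (shift^[i] (substApply hℓ θ x)) (shift^[i] (substApply hℓ θ y)) ≤
          r * besD1 x y) ∧
    (∀ u : ℕ → ℤ → A, (∀ k, u k ∈ orbitClosure x₀) →
        ∃ z ∈ orbitClosure x₀, ∃ φ : ℕ → ℕ, StrictMono φ ∧
          Filter.Tendsto (fun k => besD1 (u (φ k)) z) Filter.atTop (𝓝 (0 : ℝ))) ∧
    (∀ i < ℓ, ∀ j < ℓ, i ≠ j → ∀ x ∈ orbitClosure x₀, ∀ y ∈ orbitClosure x₀,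
        besD1 (shift^[i] (substApply hℓ θ x)) (shift^[j] (substApply hℓ θ y)) ≠ 0) ∧
    (∀ x ∈ orbitClosure x₀, ∃ i < ℓ, ∃ y ∈ orbitClosure x₀,
        besD1 x (shift^[i] (substApply hℓ θ y)) = 0) ∧
    (∀ i < ℓ, ∀ y ∈ orbitClosure x₀, ∃ x ∈ orbitClosure x₀,
        besD1 (shift^[i] (substApply hℓ θ y)) x = 0) := by
  have hper' : sI hℓ θ p x₀ = x₀ := hper
  have h2 := two_le_of_cMin hprim hc
  have hr1 : (((ℓ - cMin θ : ℕ) : ℝ) / ℓ) < 1 := by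
    rw [div_lt_one (by exact_mod_cast hℓ)]
    exact_mod_cast (by omega : ℓ - cMin θ < ℓ)
  have hr0 : (0:ℝ) ≤ (((ℓ - cMin θ : ℕ) : ℝ) / ℓ) := by positivity
  have tail : ∀ x ∈ orbitClosure x₀, ∃ z ∈ LY hℓ θ, ∃ M : ℕ, ∀ k : ℤ, (M : ℤ) ≤ k → z k = x k :=
    fun x hx => orbit_tail hprim hp hper' h2 hx
  have sub : ∀ y ∈ LY hℓ θ, y ∈ orbitClosure x₀ := fun y hy => LY_sub hprim hp hper' hy
  refine ⟨?_, ?_, ?_, ?_, ?_⟩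
  · intro i _
    refine ⟨_, hr1, fun x y => ?_⟩
    rw [shift_iter, shift_iter, besD1_shf]
    exact besD1_subst hℓ θ x y
  · intro u hu
    choose v hv M hM using fun k => tail (u k) (hu k)
    obtain ⟨z, hz⟩ := ulim_exists v
    have hzL : z ∈ LY hℓ θ := LY_ulim hz fun a b => Eventually.of_forall fun N => hv N a b
    refine ⟨z, sub z hzL, ?_⟩
    have hf : ∀ n : ℕ, ∃ᶠ k in (atTop : Filter ℕ),
        besD1 (u k) z ≤ (((ℓ - cMin θ : ℕ) : ℝ) / ℓ) ^ n := by
      intro n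
      have hle : (hyperfilter ℕ : Filter ℕ) ≤ atTop := by
        rw [← Nat.cofinite_eq_atTop]
        exact hyperfilter_le_cofinite
      refine Filter.Frequently.filter_mono (Filter.Eventually.frequently ?_) hle
      filter_upwards [ulim_close hv hz n] with k hk
      exact (besD1_tail (v k) (u k) z (M k)
        (fun m hm => (hM k m (by exact_mod_cast hm)).symm)).trans hk
    obtain ⟨φ, hφ, hφ2⟩ := Filter.extraction_forall_of_frequently hf
    exact ⟨φ, hφ, squeeze_zero (fun k => besD1_nonneg _ _) hφ2
      (tendsto_pow_atTop_nhds_zero_of_lt_one hr0 hr1)⟩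
  · intro i hi j hj hij x hx y hy h0
    rw [shift_iter, shift_iter] at h0
    obtain ⟨x', hx', M, hM⟩ := tail x hx
    obtain ⟨y', hy', M', hM'⟩ := tail y hy
    have e1 := besD1_tail (shf i (substApply hℓ θ x)) (shf i (substApply hℓ θ x'))
      (shf j (substApply hℓ θ y)) _ (subst_tail hM i)
    have e2 := besD1_tail (shf j (substApply hℓ θ y)) (shf j (substApply hℓ θ y'))
      (shf i (substApply hℓ θ x')) _ (subst_tail hM' j)
    rw [besD1_symm, besD1_symm (shf j (substApply hℓ θ y))] at e2
    have e3 := besD1_nonneg (shf i (substApply hℓ θ x')) (shf j (substApply hℓ θ y'))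
    have hG := GG_of_zero hx' hy' i j (by linarith)
    have hnd : ¬ (ℓ : ℤ) ∣ ((j : ℤ) - i) := by
      intro hdvd
      have := Int.eq_zero_of_abs_lt_dvd hdvd (by rw [abs_lt]; constructor <;> omega)
      omega
    obtain ⟨t, ht, hper2⟩ := periodic_of_GG hprim h2 hG hnd
    exact not_periodic hprim hc hp hper' h2 hinf t ht hper2
  · intro x hx
    obtain ⟨z, hz, M, hM⟩ := tail x hx
    obtain ⟨κ, h0, h1, w, hw, he⟩ := LY_desubst hz
    lift κ to ℕ using h0
    refine ⟨κ, by exact_mod_cast h1, w, sub w hw, ?_⟩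
    rw [shift_iter, ← he]
    exact besD1_tail_zero z x M (fun k hk => (hM k (by exact_mod_cast hk)).symm)
  · intro i _ y hy
    obtain ⟨z, hz, M, hM⟩ := tail y hy
    refine ⟨shf i (substApply hℓ θ z), sub _ (LY_shf (LY_subst hz) _), ?_⟩
    rw [shift_iter]
    exact besD1_tail_zero _ _ _ (fun k hk => (subst_tail hM i k hk).symm)
end

section
/- Let θ : A → A^ℓ be a primitive substitution of constant length ℓ over a finite alphabet A such that X_θ is infinite, (X_θ,σ) has discrete spectrum, and c(θ) > 0. Then ac¯(σ|_{X_θ}) ≤ log ℓ / (log ℓ − log(ℓ − c(θ))). If moreover C(θ) ≠ ℓ, then ac_(σ|_{X_θ}) ≥ log ℓ / (log ℓ − log(ℓ − C(θ))). -/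
open Filter Topology Set MeasureTheory
open scoped ENNReal

namespace SubstAC

open scoped Classical in
/-- number of elements of `E` below `n` -/
noncomputable def cnt (E : Set ℕ) (n : ℕ) : ℕ := ((Finset.range n).filter (fun k => k ∈ E)).card

lemma cnt_le (E : Set ℕ) (n : ℕ) : cnt E n ≤ n := by
  unfold cnt
  classical
  exact (Finset.card_filter_le _ _).trans (by simp)

lemma cnt_mono {E F : Set ℕ} (h : E ⊆ F) (n : ℕ) : cnt E n ≤ cnt F n := by
  unfold cnt
  apply Finset.card_le_card
  intro k hk
  simp only [Finset.mem_filter] at hk ⊢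
  exact ⟨hk.1, h hk.2⟩

lemma cnt_mono_right (E : Set ℕ) {n m : ℕ} (h : n ≤ m) : cnt E n ≤ cnt E m := by
  unfold cnt
  apply Finset.card_le_card
  intro k hk
  simp only [Finset.mem_filter, Finset.mem_range] at hk ⊢
  exact ⟨by omega, hk.2⟩

lemma cnt_union (E F : Set ℕ) (n : ℕ) : cnt (E ∪ F) n ≤ cnt E n + cnt F n := by
  classical
  unfold cnt
  refine le_trans (Finset.card_le_card ?_) (Finset.card_union_le _ _)
  intro k hk
  simp only [Finset.mem_filter, Finset.mem_union] at hk ⊢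
  rcases hk.2 with h | h
  · exact Or.inl ⟨hk.1, h⟩
  · exact Or.inr ⟨hk.1, h⟩

lemma cnt_biUnion {ι : Type*} (s : Finset ι) (E : ι → Set ℕ) (n B : ℕ)
    (h : ∀ i ∈ s, cnt (E i) n ≤ B) : cnt {k | ∃ i ∈ s, k ∈ E i} n ≤ s.card * B := by
  classical
  have h1 : cnt {k | ∃ i ∈ s, k ∈ E i} n ≤
      (s.biUnion (fun i => (Finset.range n).filter (fun k => k ∈ E i))).card := by
    unfold cnt
    apply Finset.card_le_card
    intro k hk
    simp only [Finset.mem_filter, Finset.mem_biUnion, mem_ofPred_eq] at hk ⊢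
    obtain ⟨h0, i, hi, hk⟩ := hk
    exact ⟨i, hi, h0, hk⟩
  refine h1.trans (Finset.card_biUnion_le_card_mul _ _ _ ?_)
  intro i hi
  have := h i hi
  unfold cnt at this
  convert this

lemma cnt_shift (E : Set ℕ) (e n : ℕ) : cnt {k | k + e ∈ E} n ≤ cnt E (n + e) := by
  classical
  unfold cnt
  apply Finset.card_le_card_of_injOn (fun k => k + e)
  · intro k hk
    simp only [Finset.coe_filter, Finset.mem_range, mem_ofPred_eq] at hk ⊢
    exact ⟨by omega, hk.2⟩
  · intro a _ b _ h
    simpa using h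

lemma cnt_add (E : Set ℕ) (n e : ℕ) : cnt E (n + e) ≤ cnt E n + e := by
  induction e with
  | zero => simp
  | succ e ih =>
    have : cnt E (n + (e+1)) ≤ cnt E (n + e) + 1 := by
      unfold cnt
      rw [← add_assoc, Finset.range_add_one, Finset.filter_insert]
      split_ifs
      · exact Finset.card_insert_le _ _
      · omega
    omega

lemma cnt_shift' (E : Set ℕ) (e n : ℕ) : cnt E n ≤ cnt {k | k + e ∈ E} n + e := by
  classical
  unfold cnt
  have h : (Finset.range n).filter (fun k => k ∈ E) ⊆
      ((Finset.range n).filter (fun k => k ∈ {k | k + e ∈ E})).image (fun k => k + e)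
        ∪ Finset.range e := by
    intro k hk
    simp only [Finset.mem_filter, Finset.mem_range, Finset.mem_union, Finset.mem_image,
      mem_ofPred_eq] at hk ⊢
    by_cases hke : k < e
    · exact Or.inr hke
    · refine Or.inl ⟨k - e, ⟨by omega, ?_⟩, by omega⟩
      have : k - e + e = k := by omega
      rw [this]; exact hk.2
  refine (Finset.card_le_card h).trans ((Finset.card_union_le _ _).trans ?_)
  have := Finset.card_image_le (s := (Finset.range n).filter (fun k => k ∈ {k | k + e ∈ E}))
    (f := fun k => k + e)
  simpa using this

lemma sum_ind (E : Set ℕ) (n : ℕ) :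
    (∑ k ∈ Finset.range n, E.indicator (fun _ => (1 : ℝ)) k) = cnt E n := by
  classical
  unfold cnt
  rw [Finset.card_filter]
  push_cast
  apply Finset.sum_congr rfl
  intro k _
  simp [Set.indicator_apply]

lemma upperDensity_eq (E : Set ℕ) :
    upperDensity E = limsup (fun n : ℕ => (cnt E n : ℝ) / n) atTop := by
  unfold upperDensity
  simp_rw [sum_ind]

lemma ratio_le_one (E : Set ℕ) (n : ℕ) : (cnt E n : ℝ) / n ≤ 1 := by
  apply div_le_one_of_le₀
  · exact_mod_cast cnt_le E n
  · positivity

lemma dens_le (E : Set ℕ) (T : ℕ) (hT : 0 < T) (a b : ℝ) (ha : 0 ≤ a)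
    (h : ∀ n : ℕ, (cnt E (T * n) : ℝ) ≤ a * n + b) : upperDensity E ≤ a / T := by
  rw [upperDensity_eq]
  have hT' : (0 : ℝ) < T := by exact_mod_cast hT
  have key : ∀ n : ℕ, 1 ≤ n → (cnt E n : ℝ) / n ≤ a / T + (a + b) / n := by
    intro n hn
    have hn' : (0 : ℝ) < n := by exact_mod_cast hn
    have h1 : n ≤ T * (n / T + 1) := (Nat.lt_mul_div_succ n hT).le
    have h2 : (cnt E n : ℝ) ≤ a * ((n / T + 1 : ℕ) : ℝ) + b :=
      le_trans (by exact_mod_cast cnt_mono_right E h1) (h _)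
    have h3 : ((n / T : ℕ) : ℝ) ≤ (n : ℝ) / T := Nat.cast_div_le
    have h4 : (cnt E n : ℝ) ≤ a * ((n : ℝ) / T + 1) + b := by
      refine h2.trans ?_
      push_cast
      gcongr
    rw [div_le_iff₀ hn']
    have : (a / T + (a + b) / n) * n = a * ((n : ℝ) / T + 1) + b := by
      field_simp
      ring
    rw [this]; exact h4
  have ht : Tendsto (fun n : ℕ => a / T + (a + b) / (n : ℝ)) atTop (𝓝 (a / T + 0)) :=
    tendsto_const_nhds.add (tendsto_const_div_atTop_nhds_zero_nat _)
  rw [add_zero] at ht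
  rw [← ht.limsup_eq]
  apply limsup_le_limsup
  · filter_upwards [eventually_ge_atTop 1] with n hn using key n hn
  · refine IsCoboundedUnder.of_frequently_ge (a := 0) (Eventually.frequently ?_)
    exact Eventually.of_forall fun n => by positivity
  · exact ht.isBoundedUnder_le

lemma le_dens (E : Set ℕ) (T : ℕ) (hT : 0 < T) (a b : ℝ)
    (h : ∀ n : ℕ, a * n ≤ (cnt E (T * n) : ℝ) + b) : a / T ≤ upperDensity E := by
  rw [upperDensity_eq]
  have hT' : (0 : ℝ) < T := by exact_mod_cast hT
  apply le_of_forall_lt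
  intro c hc
  obtain ⟨c', hc1, hc2⟩ := exists_between hc
  refine lt_of_lt_of_le hc1 ?_
  apply le_limsup_of_frequently_le
  · have ht : Tendsto (fun n : ℕ => a / T - b / T / (n : ℝ)) atTop (𝓝 (a / T - 0)) :=
      tendsto_const_nhds.sub (tendsto_const_div_atTop_nhds_zero_nat _)
    rw [sub_zero] at ht
    have hev := ht.eventually (lt_mem_nhds hc2)
    rw [frequently_atTop]
    intro N
    obtain ⟨n, hn1, hn2, hn3⟩ := (hev.and ((eventually_ge_atTop N).and
      (eventually_ge_atTop 1))).exists
    refine ⟨T * n, ?_, ?_⟩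
    · nlinarith
    · have hn' : (0 : ℝ) < n := by exact_mod_cast hn3
      refine hn1.le.trans ?_
      rw [le_div_iff₀ (by push_cast; positivity)]
      have := h n
      have e : (a / T - b / T / n) * ((T * n : ℕ) : ℝ) = a * n - b := by
        push_cast
        field_simp
      rw [e]; linarith
  · exact isBoundedUnder_of ⟨1, fun n => ratio_le_one E n⟩

end SubstAC

namespace SubstAC

variable {A : Type} {ℓ : ℕ}

/-- translate of a sequence -/
def tr (s : ℤ) (x : ℤ → A) : ℤ → A := fun n => x (n + s)

/-- set of positions of difference -/
def df (x y : ℤ → A) : Set ℕ := {k : ℕ | x (k : ℤ) ≠ y (k : ℤ)}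

lemma shift_iter (k : ℕ) (x : ℤ → A) (n : ℤ) : shift^[k] x n = x (n + k) := by
  induction k generalizing x with
  | zero => simp
  | succ k ih =>
    rw [Function.iterate_succ_apply, ih]
    simp only [shift]
    congr 1
    push_cast
    ring

lemma sub_eq (hℓ : 0 < ℓ) (θ : A → Fin ℓ → A) (x : ℤ → A) (s : ℤ) (i : Fin ℓ) :
    substApply hℓ θ x (ℓ * s + i) = θ (x s) i := by
  have hi := i.2
  have h1 : ((ℓ : ℤ) * s + (i : ℕ)) / (ℓ : ℤ) = s := by
    rw [Int.mul_add_ediv_left _ _ (by omega)]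
    rw [Int.ediv_eq_zero_of_lt (by omega) (by omega)]; simp
  have h2 : ((ℓ : ℤ) * s + (i : ℕ)) % (ℓ : ℤ) = i := by
    rw [Int.mul_add_emod_self_left]
    exact Int.emod_eq_of_lt (by omega) (by omega)
  unfold substApply
  rw [h1]
  congr 1
  ext
  simp only [h2, Int.toNat_natCast]

lemma sub_eq' (hℓ : 0 < ℓ) (θ : A → Fin ℓ → A) (x y : ℤ → A) (s s' i : ℤ) (hi : 0 ≤ i)
    (hi' : i < ℓ) (h : x s = y s') :
    substApply hℓ θ x (ℓ * s + i) = substApply hℓ θ y (ℓ * s' + i) := by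
  lift i to ℕ using hi
  have e := sub_eq hℓ θ x s ⟨i, by omega⟩
  have e' := sub_eq hℓ θ y s' ⟨i, by omega⟩
  simp only at e e'
  rw [e, e', h]

lemma sub_tr (hℓ : 0 < ℓ) (θ : A → Fin ℓ → A) (x : ℤ → A) (s : ℤ) :
    substApply hℓ θ (tr s x) = tr (ℓ * s) (substApply hℓ θ x) := by
  funext n
  have hp : (0 : ℤ) < ℓ := by exact_mod_cast hℓ
  have h := sub_eq' hℓ θ (tr s x) x (n / ℓ) (n / ℓ + s) (n % ℓ) (Int.emod_nonneg _ hp.ne')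
    (Int.emod_lt_of_pos _ hp) rfl
  unfold tr at *
  rw [Int.mul_ediv_add_emod] at h
  rw [h]
  congr 1
  have := Int.mul_ediv_add_emod n ℓ
  linarith

lemma iter_tr (hℓ : 0 < ℓ) (θ : A → Fin ℓ → A) (k : ℕ) (x : ℤ → A) (s : ℤ) :
    (substApply hℓ θ)^[k] (tr s x) = tr ((ℓ : ℤ) ^ k * s) ((substApply hℓ θ)^[k] x) := by
  induction k with
  | zero => simp
  | succ k ih =>
    rw [Function.iterate_succ_apply', ih, sub_tr, Function.iterate_succ_apply']
    congr 1
    ring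

lemma iter_loc (hℓ : 0 < ℓ) (θ : A → Fin ℓ → A) (k : ℕ) (x y : ℤ → A) (s s' i : ℤ) (hi : 0 ≤ i)
    (hi' : i < (ℓ : ℤ) ^ k) (h : x s = y s') :
    (substApply hℓ θ)^[k] x ((ℓ : ℤ) ^ k * s + i) =
      (substApply hℓ θ)^[k] y ((ℓ : ℤ) ^ k * s' + i) := by
  induction k generalizing x y s s' i with
  | zero =>
    have : i = 0 := by simp at hi'; omega
    subst this
    simpa using h
  | succ k ih =>
    have hp : (0 : ℤ) < (ℓ : ℤ) ^ k := by positivity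
    rw [Function.iterate_succ_apply, Function.iterate_succ_apply]
    have hq0 : 0 ≤ i / (ℓ : ℤ) ^ k := Int.ediv_nonneg hi hp.le
    have hq1 : i / (ℓ : ℤ) ^ k < ℓ := by
      apply Int.ediv_lt_of_lt_mul hp
      rw [pow_succ] at hi'; linarith
    have := ih _ _ (ℓ * s + i / (ℓ : ℤ) ^ k) (ℓ * s' + i / (ℓ : ℤ) ^ k) (i % (ℓ : ℤ) ^ k)
      (Int.emod_nonneg _ hp.ne') (Int.emod_lt_of_pos _ hp)
      (sub_eq' hℓ θ x y s s' (i / (ℓ : ℤ) ^ k) hq0 hq1 h)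
    have e := Int.mul_ediv_add_emod i ((ℓ : ℤ) ^ k)
    have e1 : ∀ s : ℤ, (ℓ : ℤ) ^ k * (ℓ * s + i / (ℓ : ℤ) ^ k) + i % (ℓ : ℤ) ^ k
        = (ℓ : ℤ) ^ (k + 1) * s + i := by
      intro s
      rw [pow_succ]; linear_combination e
    rwa [e1, e1] at this

lemma cnt_succ (E : Set ℕ) [DecidablePred (· ∈ E)] (n : ℕ) :
    cnt E (n + 1) = cnt E n + if n ∈ E then 1 else 0 := by
  classical
  unfold cnt
  rw [Finset.range_add_one, Finset.filter_insert]
  split_ifs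
  · rw [Finset.card_insert_of_notMem (by simp)]
  · simp

open scoped Classical in
lemma cnt_add_eq (E : Set ℕ) (n e : ℕ) :
    cnt E (n + e) = cnt E n + ((Finset.univ : Finset (Fin e)).filter (fun i : Fin e => n + i.1 ∈ E)).card := by
  induction e with
  | zero => simp
  | succ e ih =>
    rw [← add_assoc, cnt_succ, ih, Finset.card_filter, Finset.card_filter,
      Fin.sum_univ_castSucc]
    simp only [Fin.val_castSucc, Fin.val_last]
    ring

open scoped Classical in
lemma card_ne (θ : A → Fin ℓ → A) (a b : A) :
    ((Finset.univ : Finset (Fin ℓ)).filter (fun i => θ a i ≠ θ b i)).card + coincCount θ a b = ℓ := by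
  unfold coincCount
  rw [add_comm]
  have := Finset.card_filter_add_card_filter_not (s := (Finset.univ : Finset (Fin ℓ)))
    (fun i => θ a i = θ b i)
  simpa using this

lemma coinc_le (θ : A → Fin ℓ → A) (a b : A) : coincCount θ a b ≤ ℓ := by
  have := card_ne θ a b
  omega

lemma cMin_le (θ : A → Fin ℓ → A) {a b : A} (h : a ≠ b) : cMin θ ≤ coincCount θ a b :=
  Nat.sInf_le ⟨a, b, h, rfl⟩

lemma le_cMax (θ : A → Fin ℓ → A) {a b : A} (h : a ≠ b) : coincCount θ a b ≤ cMax θ := by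
  apply le_csSup
  · refine ⟨ℓ, ?_⟩
    rintro _ ⟨a, b, _, rfl⟩
    exact coinc_le θ a b
  · exact ⟨a, b, h, rfl⟩

lemma cMax_le (θ : A → Fin ℓ → A) : cMax θ ≤ ℓ := by
  apply csSup_le'
  rintro _ ⟨a, b, _, rfl⟩
  exact coinc_le θ a b

open scoped Classical in
lemma df_sub_card (hℓ : 0 < ℓ) (θ : A → Fin ℓ → A) (x y : ℤ → A) (n : ℕ) :
    ((Finset.univ : Finset (Fin ℓ)).filter
      (fun i => ℓ * n + i.1 ∈ df (substApply hℓ θ x) (substApply hℓ θ y))).card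
      = ℓ - coincCount θ (x n) (y n) := by
  have h := card_ne θ (x n) (y n)
  have : ∀ i : Fin ℓ, ℓ * n + i.1 ∈ df (substApply hℓ θ x) (substApply hℓ θ y) ↔
      θ (x n) i ≠ θ (y n) i := by
    intro i
    unfold df
    rw [mem_ofPred_eq]
    have e1 := sub_eq hℓ θ x n i
    have e2 := sub_eq hℓ θ y n i
    push_cast
    rw [e1, e2]
  simp_rw [this]
  omega

lemma cnt_sub_le (hℓ : 0 < ℓ) (θ : A → Fin ℓ → A) (x y : ℤ → A) (n : ℕ) :
    cnt (df (substApply hℓ θ x) (substApply hℓ θ y)) (ℓ * n) ≤ (ℓ - cMin θ) * cnt (df x y) n := by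
  classical
  induction n with
  | zero => simp [cnt]
  | succ n ih =>
    have e : ℓ * (n + 1) = ℓ * n + ℓ := by ring
    rw [e, cnt_add_eq _ (ℓ * n) ℓ, df_sub_card, cnt_succ, mul_add]
    refine add_le_add ih ?_
    split_ifs with h
    · have := cMin_le θ (a := x n) (b := y n) h
      omega
    · have h' : x n = y n := by
        by_contra hh; exact h hh
      have := card_ne θ (x n) (y n)
      rw [h'] at this ⊢
      simp at this
      omega

lemma le_cnt_sub (hℓ : 0 < ℓ) (θ : A → Fin ℓ → A) (x y : ℤ → A) (n : ℕ) :
    (ℓ - cMax θ) * cnt (df x y) n ≤ cnt (df (substApply hℓ θ x) (substApply hℓ θ y)) (ℓ * n) := by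
  classical
  induction n with
  | zero => simp [cnt]
  | succ n ih =>
    have e : ℓ * (n + 1) = ℓ * n + ℓ := by ring
    rw [e, cnt_add_eq _ (ℓ * n) ℓ, df_sub_card, cnt_succ, mul_add]
    refine add_le_add ih ?_
    split_ifs with h
    · have := le_cMax θ (a := x n) (b := y n) h
      omega
    · simp

lemma cnt_iter_le (hℓ : 0 < ℓ) (θ : A → Fin ℓ → A) (k : ℕ) (x y : ℤ → A) (n : ℕ) :
    cnt (df ((substApply hℓ θ)^[k] x) ((substApply hℓ θ)^[k] y)) (ℓ ^ k * n) ≤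
      (ℓ - cMin θ) ^ k * cnt (df x y) n := by
  induction k with
  | zero => simp
  | succ k ih =>
    rw [Function.iterate_succ_apply', Function.iterate_succ_apply', pow_succ', mul_assoc,
      pow_succ', mul_assoc]
    exact (cnt_sub_le hℓ θ _ _ _).trans (Nat.mul_le_mul_left _ ih)

lemma le_cnt_iter (hℓ : 0 < ℓ) (θ : A → Fin ℓ → A) (k : ℕ) (x y : ℤ → A) (n : ℕ) :
    (ℓ - cMax θ) ^ k * cnt (df x y) n ≤
    cnt (df ((substApply hℓ θ)^[k] x) ((substApply hℓ θ)^[k] y)) (ℓ ^ k * n) := by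
  induction k with
  | zero => simp
  | succ k ih =>
    rw [Function.iterate_succ_apply', Function.iterate_succ_apply', pow_succ', mul_assoc,
      pow_succ', mul_assoc]
    exact (Nat.mul_le_mul_left _ ih).trans (le_cnt_sub hℓ θ _ _ _)

lemma cMin_exists (θ : A → Fin ℓ → A) (hc : 0 < cMin θ) : ∃ a b : A, a ≠ b := by
  by_contra h
  push Not at h
  have : cMin θ = 0 := by
    unfold cMin
    convert Nat.sInf_empty
    ext n
    simp only [mem_ofPred_eq, mem_empty_iff_false, iff_false]
    rintro ⟨a, b, hab, _⟩
    exact hab (h a b)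
  omega

lemma cMin_le_cMax (θ : A → Fin ℓ → A) (hc : 0 < cMin θ) : cMin θ ≤ cMax θ := by
  obtain ⟨a, b, h⟩ := cMin_exists θ hc
  exact (cMin_le θ h).trans (le_cMax θ h)

/-- existence of a constant column of some power -/
lemma exists_const_col [Fintype A] (hℓ : 0 < ℓ) (θ : A → Fin ℓ → A) (hc : 0 < cMin θ) :
    ∃ (k : ℕ) (j : ℤ) (c : A), 0 ≤ j ∧ j < (ℓ : ℤ) ^ k ∧
      ∀ (x : ℤ → A) (s : ℤ), (substApply hℓ θ)^[k] x ((ℓ : ℤ) ^ k * s + j) = c := by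
  classical
  let R : ℕ → ℤ → Finset A := fun k j =>
    Finset.univ.image (fun a : A => (substApply hℓ θ)^[k] (fun _ => a) j)
  let P : ℕ → Prop := fun r => ∃ (k : ℕ) (j : ℤ), 0 ≤ j ∧ j < (ℓ : ℤ) ^ k ∧ (R k j).card = r
  have hP : ∃ r, P r := ⟨_, 0, 0, le_refl _, by simp, rfl⟩
  obtain ⟨k, j, hj0, hj1, hcard⟩ := Nat.find_spec hP
  have hmin := fun r (h : r < Nat.find hP) => Nat.find_min hP h
  obtain ⟨a0, b0, hab0⟩ := cMin_exists θ hc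
  have hle : (R k j).card ≤ 1 := by
    by_contra hgt
    push Not at hgt
    obtain ⟨a, ha, b, hb, hab⟩ := Finset.one_lt_card.1 hgt
    have hco : 0 < coincCount θ a b := lt_of_lt_of_le hc (cMin_le θ hab)
    unfold coincCount at hco
    obtain ⟨i, hi⟩ := Finset.card_pos.1 hco
    simp only [Finset.mem_filter, Finset.mem_univ, true_and] at hi
    have hR : R (k+1) (ℓ * j + i) = (R k j).image (fun a => θ a i) := by
      simp only [R, Finset.image_image]
      congr 1
      funext a
      rw [Function.iterate_succ_apply', sub_eq]
      rfl
    have hlt : (R (k+1) (ℓ * j + i)).card < (R k j).card := by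
      rw [hR]
      apply lt_of_le_of_ne Finset.card_image_le
      intro h
      exact hab (Finset.card_image_iff.1 h (by simpa using ha) (by simpa using hb) hi)
    rw [hcard] at hlt
    refine hmin _ hlt ⟨k+1, ℓ * j + i, by positivity, ?_, rfl⟩
    have := i.2
    rw [pow_succ]
    nlinarith
  refine ⟨k, j, (substApply hℓ θ)^[k] (fun _ => a0) j, hj0, hj1, ?_⟩
  intro x s
  have := iter_loc hℓ θ k x (fun _ => x s) s 0 j hj0 hj1 rfl
  rw [this, mul_zero, zero_add]
  exact Finset.card_le_one.1 hle _ (Finset.mem_image_of_mem _ (Finset.mem_univ _)) _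
    (Finset.mem_image_of_mem _ (Finset.mem_univ _))

end SubstAC

namespace SubstAC

lemma tendsto_aux (q r : ℝ) :
    Tendsto (fun ν : ℝ => ENNReal.ofReal (q + r / (- Real.log ν))) (𝓝[>] (0 : ℝ))
      (𝓝 (ENNReal.ofReal q)) := by
  apply ENNReal.tendsto_ofReal
  have h1 : Tendsto (fun ν : ℝ => - Real.log ν) (𝓝[>] (0 : ℝ)) atTop :=
    tendsto_neg_atBot_atTop.comp Real.tendsto_log_nhdsGT_zero
  have h2 : Tendsto (fun ν : ℝ => q + r / (- Real.log ν)) (𝓝[>] (0 : ℝ)) (𝓝 (q + 0)) :=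
    tendsto_const_nhds.add (h1.const_div_atTop r)
  simpa using h2

lemma ev_log (b : ℝ) : ∀ᶠ ν : ℝ in 𝓝[>] (0 : ℝ), 0 < ν ∧ b < - Real.log ν := by
  have h1 : Tendsto (fun ν : ℝ => - Real.log ν) (𝓝[>] (0 : ℝ)) atTop :=
    tendsto_neg_atBot_atTop.comp Real.tendsto_log_nhdsGT_zero
  filter_upwards [h1.eventually_gt_atTop b, self_mem_nhdsWithin] with ν h2 h3
  exact ⟨h3, h2⟩

lemma limsup_bound (s : ℝ → ℕ∞) (ℓ : ℕ) (lam B : ℝ) (hl0 : 0 < lam) (hl1 : lam < 1)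
    (hB : 0 < B) (h : ∀ ν : ℝ, 0 < ν → ∀ k : ℕ, B * lam ^ k < ν → s ν ≤ ((ℓ ^ k : ℕ) : ℕ∞)) :
    limsup (fun ν : ℝ => logRatio (s ν) ν) (𝓝[>] (0 : ℝ)) ≤
      ENNReal.ofReal (Real.log ℓ / (- Real.log lam)) := by
  have ha : 0 < - Real.log lam := by
    have := Real.log_neg hl0 hl1
    linarith
  set a := - Real.log lam with ha_def
  have hlogℓ : 0 ≤ Real.log ℓ := Real.log_natCast_nonneg ℓ
  rw [← (tendsto_aux (Real.log ℓ / a) ((Real.log B / a + 1) * Real.log ℓ)).limsup_eq]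
  refine limsup_le_limsup ?_
  · filter_upwards [ev_log 0, ev_log (- Real.log B)] with ν h1 h2
    obtain ⟨hν, ht⟩ := h1
    have htB := h2.2
    set t := - Real.log ν with ht_def
    set k := ⌊(Real.log B + t) / a⌋₊ + 1 with hk
    have hk1 : (Real.log B + t) / a < k := by
      rw [hk]; push_cast
      exact Nat.lt_floor_add_one _
    have hk2 : (k : ℝ) ≤ (Real.log B + t) / a + 1 := by
      rw [hk]; push_cast
      have := Nat.floor_le (a := (Real.log B + t) / a) (div_nonneg (by linarith) ha.le)
      linarith
    have hlt : B * lam ^ k < ν := by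
      rw [← Real.log_lt_log_iff (by positivity) hν, Real.log_mul hB.ne' (by positivity),
        Real.log_pow]
      rw [div_lt_iff₀ ha] at hk1
      have : Real.log lam = - a := by rw [ha_def]; ring
      rw [this]
      have : Real.log ν = - t := by rw [ht_def]; ring
      rw [this]
      linarith
    have hs := h ν hν k hlt
    have hne : s ν ≠ ⊤ := ne_top_of_le_ne_top (ENat.natCast_ne_top _) hs
    unfold logRatio
    rw [if_neg hne]
    apply ENNReal.ofReal_le_ofReal
    have h3 : (s ν).toNat ≤ ℓ ^ k := by
      have := ENat.toNat_le_toNat hs (ENat.natCast_ne_top _)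
      simpa only [ENat.toNat_natCast] using this
    have h4 : Real.log ((s ν).toNat : ℝ) ≤ k * Real.log ℓ := by
      rcases Nat.eq_zero_or_pos (s ν).toNat with h0 | h0
      · rw [h0]; simp; positivity
      · rw [← Real.log_pow]
        apply Real.log_le_log (by exact_mod_cast h0)
        exact_mod_cast h3
    have h5 : Real.log ℓ / a + (Real.log B / a + 1) * Real.log ℓ / t
        = ((Real.log B + t) / a + 1) * Real.log ℓ / t := by
      field_simp
      ring
    rw [h5]
    gcongr
    exact h4.trans (mul_le_mul_of_nonneg_right hk2 hlogℓ)

lemma liminf_bound (s : ℝ → ℕ∞) (ℓ : ℕ) (hℓ : 0 < ℓ) (lam B : ℝ) (hl0 : 0 < lam) (hl1 : lam < 1)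
    (hB : 0 < B) (h : ∀ ν : ℝ, 0 < ν → ∀ k : ℕ, ν ≤ B * lam ^ k → ((ℓ ^ k : ℕ) : ℕ∞) ≤ s ν) :
    ENNReal.ofReal (Real.log ℓ / (- Real.log lam)) ≤
      liminf (fun ν : ℝ => logRatio (s ν) ν) (𝓝[>] (0 : ℝ)) := by
  have ha : 0 < - Real.log lam := by
    have := Real.log_neg hl0 hl1
    linarith
  set a := - Real.log lam with ha_def
  have hlogℓ : 0 ≤ Real.log ℓ := Real.log_natCast_nonneg ℓ
  rw [← (tendsto_aux (Real.log ℓ / a) ((Real.log B / a - 1) * Real.log ℓ)).liminf_eq]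
  refine liminf_le_liminf ?_
  · filter_upwards [ev_log 0, ev_log (- Real.log B)] with ν h1 h2
    obtain ⟨hν, ht⟩ := h1
    have htB := h2.2
    set t := - Real.log ν with ht_def
    set k := ⌊(Real.log B + t) / a⌋₊ with hk
    have hk1 : (Real.log B + t) / a - 1 ≤ k := by
      have := Nat.lt_floor_add_one ((Real.log B + t) / a)
      rw [← hk] at this
      linarith
    have hk2 : (k : ℝ) ≤ (Real.log B + t) / a :=
      Nat.floor_le (a := (Real.log B + t) / a) (div_nonneg (by linarith) ha.le)
    have hlt : ν ≤ B * lam ^ k := by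
      rw [← Real.log_le_log_iff hν (by positivity), Real.log_mul hB.ne' (by positivity),
        Real.log_pow]
      rw [le_div_iff₀ ha] at hk2
      have : Real.log lam = - a := by rw [ha_def]; ring
      rw [this]
      have : Real.log ν = - t := by rw [ht_def]; ring
      rw [this]
      linarith
    have hs := h ν hν k hlt
    unfold logRatio
    split_ifs with hne
    · exact le_top
    apply ENNReal.ofReal_le_ofReal
    have h3 : ℓ ^ k ≤ (s ν).toNat := by
      have := ENat.toNat_le_toNat hs hne
      simpa only [ENat.toNat_natCast] using this
    have h4 : k * Real.log ℓ ≤ Real.log ((s ν).toNat : ℝ) := by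
      rw [← Real.log_pow]
      apply Real.log_le_log (by positivity)
      exact_mod_cast h3
    have h5 : Real.log ℓ / a + (Real.log B / a - 1) * Real.log ℓ / t
        = ((Real.log B + t) / a - 1) * Real.log ℓ / t := by
      field_simp
      ring
    rw [h5]
    gcongr
    exact (mul_le_mul_of_nonneg_right hk1 hlogℓ).trans h4

end SubstAC

namespace SubstAC

variable {A : Type} {ℓ : ℕ}

lemma dist_pos_diff (x y : ℤ → A) (δ : ℝ) (N : ℕ) (hδ : 0 < δ) (hN : ((2 : ℝ)⁻¹) ^ N < δ)
    (h : δ ≤ cantorDist x y) : ∃ i ∈ Finset.range (2 * N + 1), x ((i : ℤ) - N) ≠ y ((i : ℤ) - N) := by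
  by_contra hcon
  push Not at hcon
  have hag : ∀ k : ℤ, k.natAbs ≤ N → x k = y k := by
    intro k hk
    have := hcon (k + N).toNat (by rw [Finset.mem_range]; omega)
    have e : (((k + N).toNat : ℕ) : ℤ) - N = k := by omega
    rwa [e] at this
  unfold cantorDist at h
  split_ifs at h with hxy
  · linarith
  · have hne : {n : ℕ | ∃ k : ℤ, k.natAbs = n ∧ x k ≠ y k}.Nonempty := by
      obtain ⟨k, hk⟩ := Function.ne_iff.1 hxy
      exact ⟨_, k, rfl, hk⟩
    obtain ⟨k, hk1, hk2⟩ := Nat.sInf_mem hne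
    set n := sInf {n : ℕ | ∃ k : ℤ, k.natAbs = n ∧ x k ≠ y k}
    have hn : N ≤ n := by
      by_contra hlt
      exact hk2 (hag k (by omega))
    have : (2 : ℝ) ^ (-(n : ℤ)) ≤ (2 : ℝ)⁻¹ ^ N := by
      rw [zpow_neg, zpow_natCast, ← inv_pow]
      exact pow_le_pow_of_le_one (by norm_num) (by norm_num) hn
    linarith

lemma dist_ge_one (x y : ℤ → A) (h : x 0 ≠ y 0) : 1 ≤ cantorDist x y := by
  unfold cantorDist
  have hxy : x ≠ y := fun e => h (by rw [e])
  rw [if_neg hxy]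
  have : sInf {n : ℕ | ∃ k : ℤ, k.natAbs = n ∧ x k ≠ y k} = 0 :=
    Nat.sInf_eq_zero.2 (Or.inl ⟨0, rfl, h⟩)
  rw [this]
  simp

lemma upper_dens (hℓ : 0 < ℓ) (θ : A → Fin ℓ → A) (k j N : ℕ) (x y : ℤ → A) (δ : ℝ)
    (hδ : 0 < δ) (hN : ((2 : ℝ)⁻¹) ^ N < δ) :
    upperDensity {d : ℕ | δ ≤ cantorDist (shift^[d] (tr j ((substApply hℓ θ)^[k] x)))
      (shift^[d] (tr j ((substApply hℓ θ)^[k] y)))} ≤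
      (2 * N + 1) * (((ℓ - cMin θ : ℕ) : ℝ) / ℓ) ^ k := by
  set u := (substApply hℓ θ)^[k] (tr (-N) x) with hu
  set v := (substApply hℓ θ)^[k] (tr (-N) y) with hv
  have hpos : 0 < ℓ ^ k := by positivity
  obtain ⟨P, hP⟩ : ∃ P : ℕ, P + N = ℓ ^ k * N :=
    ⟨ℓ ^ k * N - N, Nat.sub_add_cancel (Nat.le_mul_of_pos_left _ hpos)⟩
  have hPz : (P : ℤ) + N = (ℓ : ℤ) ^ k * N := by exact_mod_cast hP
  set E := 2 * N + j + P
  have hsub : {d : ℕ | δ ≤ cantorDist (shift^[d] (tr j ((substApply hℓ θ)^[k] x)))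
      (shift^[d] (tr j ((substApply hℓ θ)^[k] y)))} ⊆
      {d | ∃ i ∈ Finset.range (2 * N + 1), d ∈ {d : ℕ | d + (i + j + P) ∈ df u v}} := by
    intro d hd
    obtain ⟨i, hi, hne⟩ := dist_pos_diff _ _ δ N hδ hN hd
    refine ⟨i, hi, ?_⟩
    rw [mem_ofPred_eq]
    unfold df
    rw [mem_ofPred_eq, hu, hv, iter_tr, iter_tr]
    rw [shift_iter, shift_iter] at hne
    unfold tr at hne ⊢
    have e : ((d + (i + j + P) : ℕ) : ℤ) + (ℓ : ℤ) ^ k * -N = (i : ℤ) - N + d + j := by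
      push_cast
      linear_combination hPz
    rw [e]
    exact hne
  have hb := dens_le {d : ℕ | δ ≤ cantorDist (shift^[d] (tr j ((substApply hℓ θ)^[k] x)))
      (shift^[d] (tr j ((substApply hℓ θ)^[k] y)))} (ℓ ^ k) hpos
      ((2 * N + 1) * ((ℓ - cMin θ : ℕ) : ℝ) ^ k) ((2 * N + 1) * E) (by positivity) ?_
  · refine hb.trans (le_of_eq ?_)
    push_cast
    rw [div_pow]
    ring
  · intro n
    have h1 : cnt (df u v) (ℓ ^ k * n) ≤ (ℓ - cMin θ) ^ k * n :=
      (cnt_iter_le hℓ θ k _ _ n).trans (Nat.mul_le_mul_left _ (cnt_le _ _))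
    have h2 := cnt_biUnion (Finset.range (2 * N + 1))
      (fun i => {d : ℕ | d + (i + j + P) ∈ df u v}) (ℓ ^ k * n)
      ((ℓ - cMin θ) ^ k * n + E) (by
        intro i hi
        rw [Finset.mem_range] at hi
        refine (cnt_shift _ _ _).trans ((cnt_add _ _ _).trans ?_)
        have : i + j + P ≤ E := by omega
        omega)
    have h3 := (cnt_mono hsub (ℓ ^ k * n)).trans h2
    rw [Finset.card_range] at h3
    have h4 : ((cnt {d : ℕ | δ ≤ cantorDist (shift^[d] (tr j ((substApply hℓ θ)^[k] x)))
      (shift^[d] (tr j ((substApply hℓ θ)^[k] y)))} (ℓ ^ k * n) : ℕ) : ℝ) ≤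
      (((2 * N + 1) * ((ℓ - cMin θ) ^ k * n + E) : ℕ) : ℝ) := by exact_mod_cast h3
    refine h4.trans (le_of_eq ?_)
    generalize ℓ - cMin θ = w
    push_cast
    ring

lemma per_iter (hℓ : 0 < ℓ) (θ : A → Fin ℓ → A) (x₀ : ℤ → A) (p : ℕ) (hp : 1 ≤ p)
    (hper : (substApply hℓ θ)^[p] x₀ = x₀) (k : ℕ) :
    ∃ z, x₀ = (substApply hℓ θ)^[k] z := by
  refine ⟨(substApply hℓ θ)^[p * k - k] x₀, ?_⟩
  rw [← Function.iterate_add_apply, Nat.add_sub_cancel' (Nat.le_mul_of_pos_left _ hp),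
    Function.iterate_mul]
  exact (Function.iterate_fixed hper k).symm

lemma sub_continuous [TopologicalSpace A] [DiscreteTopology A] (hℓ : 0 < ℓ)
    (θ : A → Fin ℓ → A) : Continuous (substApply hℓ θ) := by
  apply continuous_pi
  intro n
  unfold substApply
  have h : Continuous (fun a : A => θ a ⟨(n % (ℓ : ℤ)).toNat, by
    have h1 : 0 ≤ n % (ℓ : ℤ) := Int.emod_nonneg n (by exact_mod_cast hℓ.ne')
    have h2 : n % (ℓ : ℤ) < (ℓ : ℤ) := Int.emod_lt_of_pos n (by exact_mod_cast hℓ)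
    omega⟩) := continuous_of_discreteTopology
  exact h.comp (continuous_apply _)

lemma desubst [Fintype A] [TopologicalSpace A] [DiscreteTopology A] (hℓ : 0 < ℓ)
    (θ : A → Fin ℓ → A) (x₀ : ℤ → A) (p : ℕ) (hp : 1 ≤ p)
    (hper : (substApply hℓ θ)^[p] x₀ = x₀) (k : ℕ) (x : ℤ → A) (hx : x ∈ orbitClosure x₀) :
    ∃ j : Fin (ℓ ^ k), ∃ z : ℤ → A, x = tr j.1 ((substApply hℓ θ)^[k] z) := by
  have hcl : IsClosed (⋃ j : Fin (ℓ ^ k),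
      range (fun z : ℤ → A => tr (j.1 : ℤ) ((substApply hℓ θ)^[k] z))) := by
    apply isClosed_iUnion_of_finite
    intro j
    apply IsCompact.isClosed
    apply isCompact_range
    have h1 : Continuous (tr (j.1 : ℤ) : (ℤ → A) → (ℤ → A)) := by
      unfold tr
      exact continuous_pi fun n => continuous_apply _
    exact h1.comp ((sub_continuous hℓ θ).iterate k)
  have hsub : {y | ∃ k : ℤ, y = fun n => x₀ (n + k)} ⊆ (⋃ j : Fin (ℓ ^ k),
      range (fun z : ℤ → A => tr (j.1 : ℤ) ((substApply hℓ θ)^[k] z))) := by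
    rintro _ ⟨q, rfl⟩
    obtain ⟨z, hz⟩ := per_iter hℓ θ x₀ p hp hper k
    have hpos : (0 : ℤ) < (ℓ : ℤ) ^ k := by positivity
    have h0 := Int.emod_nonneg q hpos.ne'
    have h1 := Int.emod_lt_of_pos q hpos
    rw [mem_iUnion]
    refine ⟨⟨(q % (ℓ : ℤ) ^ k).toNat, ?_⟩, tr (q / (ℓ : ℤ) ^ k) z, ?_⟩
    · zify
      rw [Int.toNat_of_nonneg h0]
      exact h1
    · simp only
      rw [iter_tr, ← hz, Int.toNat_of_nonneg h0]
      funext n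
      unfold tr
      congr 1
      have := Int.mul_ediv_add_emod q ((ℓ : ℤ) ^ k)
      linarith
  have := closure_minimal hsub hcl hx
  rw [mem_iUnion] at this
  obtain ⟨j, z, hz⟩ := this
  exact ⟨j, z, hz.symm⟩

lemma sepNum_le [Fintype A] [TopologicalSpace A] [DiscreteTopology A] (hℓ : 0 < ℓ)
    (θ : A → Fin ℓ → A) (x₀ : ℤ → A) (p : ℕ) (hp : 1 ≤ p)
    (hper : (substApply hℓ θ)^[p] x₀ = x₀) (δ ν : ℝ) (N k : ℕ)
    (hδ : 0 < δ) (hN : ((2 : ℝ)⁻¹) ^ N < δ)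
    (hν : (2 * N + 1) * (((ℓ - cMin θ : ℕ) : ℝ) / ℓ) ^ k < ν) :
    sepNum cantorDist shift (orbitClosure x₀) δ ν ≤ ((ℓ ^ k : ℕ) : ℕ∞) := by
  unfold sepNum
  apply iSup₂_le
  intro S hS
  obtain ⟨hSX, hsep⟩ := hS
  have : NeZero (ℓ ^ k) := ⟨by positivity⟩
  have : Nonempty (ℤ → A) := ⟨x₀⟩
  have : Nonempty A := ⟨x₀ 0⟩
  choose! j z hjz using desubst hℓ θ x₀ p hp hper k
  have hinj : InjOn j S := by
    intro x hx y hy hxy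
    by_contra hne
    have h1 := hsep x hx y hy hne
    rw [hjz x (hSX hx), hjz y (hSX hy), hxy] at h1
    have h2 := upper_dens hℓ θ k (j y).1 N (z x) (z y) δ hδ hN
    linarith
  rw [← hinj.encard_image]
  refine encard_le_card.trans ?_
  simp

end SubstAC

namespace SubstAC

variable {A : Type} {ℓ : ℕ}

/-- every block of a desubstituted sequence contains a change of letter -/
lemma change_count (hℓ : 0 < ℓ) (θ : A → Fin ℓ → A) (M : ℕ) (a₀ b₀ : A) (hab : a₀ ≠ b₀)
    (hM : ∀ a b : A, ∃ j : ℤ, 0 ≤ j ∧ j < (ℓ : ℤ) ^ M ∧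
      (substApply hℓ θ)^[M] (fun _ => a) j = b) (z : ℤ → A) (n : ℕ) :
    n ≤ cnt (df ((substApply hℓ θ)^[M] z) (tr 1 ((substApply hℓ θ)^[M] z))) (ℓ ^ M * n) := by
  classical
  set w := (substApply hℓ θ)^[M] z with hw
  have hblock : ∀ s : ℕ, ∃ i : ℕ, i < ℓ ^ M ∧ ℓ ^ M * s + i ∈ df w (tr 1 w) := by
    intro s
    by_contra hcon
    push Not at hcon
    have hall : ∀ i : ℕ, i < ℓ ^ M → w ((ℓ : ℤ) ^ M * s + i) = w ((ℓ : ℤ) ^ M * s) := by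
      intro i
      induction i with
      | zero => intro _; simp
      | succ i ih =>
        intro hi
        have h1 := hcon i (by omega)
        unfold df tr at h1
        rw [mem_ofPred_eq, not_not] at h1
        rw [← ih (by omega)]
        push_cast at h1 ⊢
        rw [h1]
        congr 1
    have hletter : ∀ b : A, w ((ℓ : ℤ) ^ M * s) = b := by
      intro b
      obtain ⟨j, hj0, hj1, hj⟩ := hM (z s) b
      lift j to ℕ using hj0
      rw [← hall j (by exact_mod_cast hj1), hw,
        iter_loc hℓ θ M z (fun _ => z s) s 0 j (by positivity) hj1 rfl]
      simpa using hj
    exact hab ((hletter a₀).symm.trans (hletter b₀))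
  choose f hf1 hf2 using hblock
  unfold cnt
  have : n = (Finset.range n).card := by simp
  conv_lhs => rw [this]
  apply Finset.card_le_card_of_injOn (fun s => ℓ ^ M * s + f s)
  · intro s hs
    simp only [Finset.coe_range, mem_Iio] at hs
    simp only [Finset.coe_filter, Finset.mem_range, mem_ofPred_eq]
    refine ⟨?_, hf2 s⟩
    have := hf1 s
    have : ℓ ^ M * (s + 1) ≤ ℓ ^ M * n := Nat.mul_le_mul_left _ hs
    linarith
  · intro s _ t _ hst
    simp only at hst
    have h1 : (ℓ ^ M * s + f s) / ℓ ^ M = s := by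
      rw [Nat.mul_add_div (by positivity), Nat.div_eq_of_lt (hf1 s)]; simp
    have h2 : (ℓ ^ M * t + f t) / ℓ ^ M = t := by
      rw [Nat.mul_add_div (by positivity), Nat.div_eq_of_lt (hf1 t)]; simp
    rw [← h1, ← h2, hst]

lemma main_count (hℓ : 0 < ℓ) (θ : A → Fin ℓ → A) (M : ℕ) (a₀ b₀ : A) (hab : a₀ ≠ b₀)
    (hM : ∀ a b : A, ∃ j : ℤ, 0 ≤ j ∧ j < (ℓ : ℤ) ^ M ∧
      (substApply hℓ θ)^[M] (fun _ => a) j = b)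
    (k₁ j₀ : ℕ) (c : A) (hj₀ : j₀ < ℓ ^ k₁)
    (hcol : ∀ (x : ℤ → A) (s : ℤ), (substApply hℓ θ)^[k₁] x ((ℓ : ℤ) ^ k₁ * s + j₀) = c)
    (x₀ : ℤ → A) (hx₀ : ∀ k, ∃ z, x₀ = (substApply hℓ θ)^[k] z)
    (m n : ℕ) (hm0 : 0 < m) (hm1 : m ≤ ℓ ^ n) (hm2 : ℓ ^ n ≤ m * ℓ) (Q : ℕ)
    (hQ : Q = 2 * ℓ ^ (k₁ + 1) + 1) :
    ∃ b : ℕ, ∀ N : ℕ, (ℓ - cMax θ) ^ (n + k₁) * N ≤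
      2 * Q * cnt (df x₀ (tr m x₀)) (ℓ ^ (n + k₁ + M) * N) + b := by
  classical
  obtain ⟨z, hz⟩ := hx₀ (n + k₁ + M)
  rw [Function.iterate_add_apply] at hz
  set w := (substApply hℓ θ)^[M] z with hw
  set L := ℓ ^ (n + k₁) with hL
  have hLpos : 0 < L := by positivity
  set E := df x₀ (tr L x₀) with hE
  set D := df x₀ (tr m x₀) with hD
  -- lower bound for E
  have hElow : ∀ N : ℕ, (ℓ - cMax θ) ^ (n + k₁) * N ≤ cnt E (ℓ ^ (n + k₁ + M) * N) := by
    intro N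
    have h1 := change_count hℓ θ M a₀ b₀ hab hM z N
    rw [← hw] at h1
    have h2 := le_cnt_iter hℓ θ (n + k₁) w (tr 1 w) (ℓ ^ M * N)
    rw [iter_tr, ← hz, mul_one] at h2
    have h3 := (Nat.mul_le_mul_left ((ℓ - cMax θ) ^ (n + k₁)) h1).trans h2
    rw [hE, hL, pow_add ℓ (n + k₁) M, mul_assoc]
    push_cast
    exact h3
  -- windows
  have hwin : ∀ (s i : ℕ), i < ℓ ^ n → L * s + (ℓ ^ n * j₀ + i) ∉ E := by
    intro s i hi
    rw [hE]
    unfold df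
    rw [mem_ofPred_eq, not_not]
    have hval : ∀ s : ℤ, x₀ ((ℓ : ℤ) ^ (n + k₁) * s + ((ℓ : ℤ) ^ n * j₀ + i)) =
        (substApply hℓ θ)^[n] (fun _ => c) i := by
      intro s
      rw [hz, Function.iterate_add_apply]
      have h1 := hcol w s
      have h2 := iter_loc hℓ θ n ((substApply hℓ θ)^[k₁] w) (fun _ => c)
        ((ℓ : ℤ) ^ k₁ * s + j₀) 0 i (by positivity) (by exact_mod_cast hi) h1
      rw [mul_zero, zero_add] at h2
      rw [← h2]
      ring_nf
    have e1 := hval s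
    have e2 := hval (s + 1)
    unfold tr
    rw [hL]
    push_cast
    rw [e1, ← e2]
    congr 1
    ring
  -- reaching a window
  have hreach : ∀ k : ℕ, ∃ t : ℕ, t ≤ Q ∧ k + t * m ∉ E := by
    intro k
    obtain ⟨g, hg⟩ : ∃ g, k + g = L * (k / L + 1) + ℓ ^ n * j₀ := by
      refine ⟨L * (k / L + 1) + ℓ ^ n * j₀ - k, Nat.add_sub_cancel' ?_⟩
      have := (Nat.lt_mul_div_succ k hLpos).le
      omega
    have hg2 : g ≤ 2 * L := by
      have h1 : L * (k / L) ≤ k := Nat.mul_div_le k L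
      have h2 : ℓ ^ n * j₀ ≤ L := by
        rw [hL, pow_add]; exact Nat.mul_le_mul_left _ hj₀.le
      rw [mul_add, mul_one] at hg
      omega
    refine ⟨(g + (m - 1)) / m, ?_, ?_⟩
    · rw [hQ]
      have h1 : g / m ≤ 2 * ℓ ^ (k₁ + 1) := by
        apply Nat.div_le_of_le_mul
        refine hg2.trans ?_
        rw [hL, pow_add, pow_succ]
        calc 2 * (ℓ ^ n * ℓ ^ k₁) ≤ 2 * ((m * ℓ) * ℓ ^ k₁) := by gcongr
          _ = m * (2 * (ℓ ^ k₁ * ℓ)) := by ring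
      have h2 : (g + (m - 1)) / m ≤ (g + m) / m := Nat.div_le_div_right (by omega)
      rw [Nat.add_div_right _ hm0] at h2
      omega
    · have h1 := Nat.div_add_mod (g + (m - 1)) m
      have h2 := Nat.mod_lt (g + (m - 1)) hm0
      obtain ⟨i, hi⟩ : ∃ i, (g + (m - 1)) % m + i = m - 1 :=
        ⟨m - 1 - (g + (m - 1)) % m, by omega⟩
      have := hwin (k / L + 1) i (by omega)
      have e : k + (g + (m - 1)) / m * m = L * (k / L + 1) + (ℓ ^ n * j₀ + i) := by
        rw [← add_assoc, ← hg, mul_comm]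
        omega
      rw [e]; exact this
  -- inclusion
  have hincl : E ⊆ {k | ∃ t ∈ Finset.range Q, k ∈ {k : ℕ | k + t * m ∈ D} ∪
      {k : ℕ | k + (t * m + L) ∈ D}} := by
    intro k hk
    have hex : ∃ t, k + t * m ∉ E := (hreach k).imp fun t h => h.2
    obtain ⟨t', ht'1, ht'2⟩ := hreach k
    have hle : Nat.find hex ≤ Q := (Nat.find_le ht'2).trans ht'1
    have hsp := Nat.find_spec hex
    have hmn := fun t (h : t < Nat.find hex) => Nat.find_min hex h
    obtain ⟨t, ht⟩ : ∃ t, Nat.find hex = t + 1 := by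
      apply Nat.exists_eq_succ_of_ne_zero
      intro h0
      rw [h0] at hsp
      simp at hsp
      exact hsp hk
    rw [ht] at hsp hle
    have hE1 : k + t * m ∈ E := by
      by_contra hh
      exact hmn t (by omega) hh
    refine ⟨t, by rw [Finset.mem_range]; omega, ?_⟩
    by_contra hno
    rw [mem_union, not_or] at hno
    obtain ⟨hn1, hn2⟩ := hno
    rw [hE] at hsp hE1
    rw [mem_ofPred_eq, hD] at hn1 hn2
    unfold df tr at hsp hE1 hn1 hn2
    rw [mem_ofPred_eq] at hsp hE1 hn1 hn2
    rw [not_not] at hsp hn1 hn2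
    apply hE1
    push_cast at *
    have e1 : (k : ℤ) + (t + 1) * m = k + t * m + m := by ring
    have e2 : (k : ℤ) + (t * m + L) = k + t * m + L := by ring
    have e3 : (k : ℤ) + t * m + L + m = k + t * m + m + L := by ring
    rw [e1] at hsp
    rw [e2, e3] at hn2
    rw [hn1, hn2, hsp]
  refine ⟨Q * (2 * (Q * m + L)), ?_⟩
  intro N
  set T := ℓ ^ (n + k₁ + M) * N with hT
  have h1 := cnt_biUnion (Finset.range Q) (fun t => {k : ℕ | k + t * m ∈ D} ∪
      {k : ℕ | k + (t * m + L) ∈ D}) T (2 * cnt D T + 2 * (Q * m + L)) (by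
        intro t ht
        rw [Finset.mem_range] at ht
        have h3 := (cnt_shift D (t * m) T).trans (cnt_add _ _ _)
        have h4 := (cnt_shift D (t * m + L) T).trans (cnt_add _ _ _)
        have h5 : t * m ≤ Q * m := Nat.mul_le_mul_right _ ht.le
        refine (cnt_union _ _ _).trans ?_
        omega)
  rw [Finset.card_range] at h1
  have h2 := (hElow N).trans ((cnt_mono hincl T).trans h1)
  refine h2.trans (le_of_eq ?_)
  ring

end SubstAC

namespace SubstAC

variable {A : Type} {ℓ : ℕ}

lemma dens_empty : upperDensity (∅ : Set ℕ) ≤ 0 := by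
  have := dens_le (∅ : Set ℕ) 1 one_pos 0 0 le_rfl (by intro n; simp [cnt])
  simpa using this

lemma lower_sep [Fintype A] (hℓ : 0 < ℓ) (θ : A → Fin ℓ → A) (hprim : IsPrimitive hℓ θ)
    (x₀ : ℤ → A) (p : ℕ) (hp : 1 ≤ p) (hper : (substApply hℓ θ)^[p] x₀ = x₀)
    (hc : 0 < cMin θ) (hC : cMax θ ≠ ℓ) :
    ∃ κ : ℝ, 0 < κ ∧ ∀ (N i j : ℕ), i < ℓ ^ N → j < ℓ ^ N → i ≠ j →
      κ * (((ℓ - cMax θ : ℕ) : ℝ) / ℓ) ^ N ≤ upperDensity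
        {k : ℕ | 1 ≤ cantorDist (shift^[k] (tr i x₀)) (shift^[k] (tr j x₀))} := by
  obtain ⟨M, hM1, hM⟩ := hprim
  obtain ⟨a₀, b₀, hab⟩ := cMin_exists θ hc
  obtain ⟨k₁, j₀, c, hj0, hj1, hcol⟩ := exists_const_col hℓ θ hc
  lift j₀ to ℕ using hj0
  have hj₀ : j₀ < ℓ ^ k₁ := by exact_mod_cast hj1
  have hCl := cMax_le θ
  have hw : 0 < ℓ - cMax θ := by omega
  obtain ⟨w, hwdef⟩ : ∃ w, w = ℓ - cMax θ := ⟨_, rfl⟩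
  rw [← hwdef] at hw ⊢
  have hwl : w ≤ ℓ := by omega
  have hℓ' : (0 : ℝ) < ℓ := by exact_mod_cast hℓ
  have hw' : (0 : ℝ) < w := by exact_mod_cast hw
  obtain ⟨Q, hQ⟩ : ∃ Q, Q = 2 * ℓ ^ (k₁ + 1) + 1 := ⟨_, rfl⟩
  have hQ' : (0 : ℝ) < Q := by rw [hQ]; positivity
  set lam : ℝ := (w : ℝ) / ℓ with hlam
  have hlam0 : 0 < lam := by positivity
  have hlam1 : lam ≤ 1 := by
    rw [hlam, div_le_one hℓ']; exact_mod_cast hwl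
  refine ⟨lam ^ k₁ / (2 * Q * ℓ ^ M), by positivity, ?_⟩
  intro N i j hi hj hij
  have hgen : ∀ (i j : ℕ), i < j → j < ℓ ^ N → ∀ F : Set ℕ,
      (∀ k : ℕ, x₀ (k + i) ≠ x₀ (k + j) → k ∈ F) →
      lam ^ k₁ / (2 * Q * ℓ ^ M) * lam ^ N ≤ upperDensity F := by
    intro i j hij hj F hF
    obtain ⟨m, rfl⟩ : ∃ m, j = i + m := ⟨j - i, by omega⟩
    have hex : ∃ n, m ≤ ℓ ^ n := ⟨N, by omega⟩
    obtain ⟨n, hn⟩ : ∃ n, n = Nat.find hex := ⟨_, rfl⟩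
    have hn1 : m ≤ ℓ ^ n := hn ▸ Nat.find_spec hex
    have hnN : n ≤ N := by rw [hn]; exact Nat.find_le (by omega)
    have hn2 : ℓ ^ n ≤ m * ℓ := by
      rcases Nat.eq_zero_or_pos n with h0 | h0
      · rw [h0, pow_zero]
        exact Nat.mul_pos (by omega) hℓ
      · obtain ⟨n', rfl⟩ : ∃ n', n = n' + 1 := ⟨n - 1, by omega⟩
        have : ¬ m ≤ ℓ ^ n' := Nat.find_min hex (by omega)
        rw [pow_succ]
        exact Nat.mul_le_mul_right _ (by omega)
    obtain ⟨b, hb⟩ := main_count hℓ θ M a₀ b₀ hab hM k₁ j₀ c hj₀ hcol x₀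
      (per_iter hℓ θ x₀ p hp hper) m n (by omega) hn1 hn2 Q hQ
    rw [← hwdef] at hb
    have hd := le_dens F (ℓ ^ (n + k₁ + M)) (by positivity) ((w : ℝ) ^ (n + k₁) / (2 * Q))
      ((i : ℝ) + b / (2 * Q)) (by
        intro R
        have h1 := hb R
        have h2 := cnt_shift' (df x₀ (tr m x₀)) i (ℓ ^ (n + k₁ + M) * R)
        have h3 : {k | k + i ∈ df x₀ (tr m x₀)} ⊆ F := by
          intro k hk
          apply hF
          unfold df tr at hk
          rw [mem_ofPred_eq, mem_ofPred_eq] at hk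
          push_cast at hk ⊢
          rw [add_assoc (k : ℤ) i m] at hk
          exact hk
        have h4 := h2.trans (Nat.add_le_add_right (cnt_mono h3 _) i)
        have h5 : w ^ (n + k₁) * R ≤ 2 * Q * (cnt F (ℓ ^ (n + k₁ + M) * R) + i) + b :=
          h1.trans (Nat.add_le_add_right (Nat.mul_le_mul_left _ h4) b)
        have h6 : (w : ℝ) ^ (n + k₁) * R ≤
            2 * Q * ((cnt F (ℓ ^ (n + k₁ + M) * R) : ℝ) + i) + b := by exact_mod_cast h5
        rw [div_mul_eq_mul_div, div_le_iff₀ (by positivity)]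
        refine h6.trans (le_of_eq ?_)
        field_simp
        ring)
    refine le_trans ?_ hd
    have e : (w : ℝ) ^ (n + k₁) / (2 * Q) / ((ℓ ^ (n + k₁ + M) : ℕ) : ℝ) =
        lam ^ k₁ / (2 * Q * ℓ ^ M) * lam ^ n := by
      rw [hlam, div_pow, div_pow]
      push_cast
      rw [pow_add, pow_add, pow_add]
      field_simp
    rw [e]
    apply mul_le_mul_of_nonneg_left _ (by positivity)
    exact pow_le_pow_of_le_one hlam0.le hlam1 hnN
  rcases lt_or_gt_of_ne hij with h | h
  · apply hgen i j h hj
    intro k hk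
    apply dist_ge_one
    rw [shift_iter, shift_iter]
    simpa [tr] using hk
  · apply hgen j i h hi
    intro k hk
    apply dist_ge_one
    rw [shift_iter, shift_iter]
    simpa [tr] using hk.symm

lemma le_sepNum [TopologicalSpace A] (x₀ : ℤ → A) (R : ℕ) (ν : ℝ) (hν : 0 < ν)
    (h : ∀ (i j : ℕ), i < R → j < R → i ≠ j → ν ≤ upperDensity
        {k : ℕ | 1 ≤ cantorDist (shift^[k] (tr i x₀)) (shift^[k] (tr j x₀))}) :
    (R : ℕ∞) ≤ sepNum cantorDist shift (orbitClosure x₀) 1 ν := by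
  have hinj : InjOn (fun i : ℕ => tr (i : ℤ) x₀) (Finset.range R : Set ℕ) := by
    intro i hi j hj hij
    by_contra hne
    simp only at hij
    have h1 := h i j (by simpa using hi) (by simpa using hj) hne
    rw [hij] at h1
    have h2 : {k : ℕ | 1 ≤ cantorDist (shift^[k] (tr (j : ℤ) x₀)) (shift^[k] (tr (j : ℤ) x₀))}
        = ∅ := by
      ext k
      simp [cantorDist]
    rw [h2] at h1
    have := dens_empty
    linarith
  have hcard : ((fun i : ℕ => tr (i : ℤ) x₀) '' (Finset.range R : Set ℕ)).encard = R := by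
    rw [hinj.encard_image, encard_coe_eq_coe_finsetCard, Finset.card_range]
  rw [← hcard]
  unfold sepNum
  refine le_iSup₂_of_le _ ?_ le_rfl
  constructor
  · rintro _ ⟨i, _, rfl⟩
    exact subset_closure ⟨i, rfl⟩
  · rintro _ ⟨i, hi, rfl⟩ _ ⟨j, hj, rfl⟩ hne
    apply h i j (by simpa using hi) (by simpa using hj)
    rintro rfl
    exact hne rfl

end SubstAC

/-- If `X_θ` is infinite, has discrete spectrum and `c(θ) > 0`, then
`ac¯(σ|_{X_θ}) ≤ log ℓ / (log ℓ - log(ℓ - c(θ)))`, and if moreover `C(θ) ≠ ℓ`, then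
`ac_(σ|_{X_θ}) ≥ log ℓ / (log ℓ - log(ℓ - C(θ)))`. -/
theorem substitution_ac_bounds_of_coincidence
    {A : Type} [Fintype A] [TopologicalSpace A] [DiscreteTopology A]
    [MeasurableSpace A] [MeasurableSingletonClass A]
    {ℓ : ℕ} (hℓ : 0 < ℓ) (θ : A → Fin ℓ → A) (hprim : IsPrimitive hℓ θ)
    (x₀ : ℤ → A) (p : ℕ) (hp : 1 ≤ p) (hper : (substApply hℓ θ)^[p] x₀ = x₀)
    (hinf : (orbitClosure x₀).Infinite)
    (hds : HasDiscreteSpectrum (orbitClosure x₀))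
    (hc : 0 < cMin θ) :
    acUpper cantorDist shift (orbitClosure x₀) ≤
      ENNReal.ofReal (Real.log ℓ / (Real.log ℓ - Real.log ((ℓ : ℝ) - cMin θ))) ∧
    (cMax θ ≠ ℓ →
      ENNReal.ofReal (Real.log ℓ / (Real.log ℓ - Real.log ((ℓ : ℝ) - cMax θ))) ≤
        acLower cantorDist shift (orbitClosure x₀)) := by
  classical
  have hℓ' : (0 : ℝ) < ℓ := by exact_mod_cast hℓ
  have hcC := SubstAC.cMin_le_cMax θ hc
  have hCl := SubstAC.cMax_le θ
  have hcast : ∀ d : ℕ, d < ℓ → Real.log ℓ - Real.log ((ℓ : ℝ) - d) =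
      - Real.log (((ℓ - d : ℕ) : ℝ) / ℓ) := by
    intro d hd
    have h1 : (0 : ℝ) < (ℓ : ℝ) - d := by
      have : (d : ℝ) < ℓ := by exact_mod_cast hd
      linarith
    rw [Nat.cast_sub hd.le, Real.log_div h1.ne' hℓ'.ne']
    ring
  have hlt : ∀ d : ℕ, 0 < d → d < ℓ →
      0 < ((ℓ - d : ℕ) : ℝ) / ℓ ∧ ((ℓ - d : ℕ) : ℝ) / ℓ < 1 := by
    intro d hd0 hd
    constructor
    · have : 0 < ℓ - d := by omega
      positivity
    · rw [div_lt_one hℓ']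
      have : ℓ - d < ℓ := by omega
      exact_mod_cast this
  constructor
  · unfold acUpper
    apply iSup₂_le
    intro δ hδ
    obtain ⟨N, hN⟩ := exists_pow_lt_of_lt_one hδ (show (2 : ℝ)⁻¹ < 1 by norm_num)
    have hsep := fun (ν : ℝ) (k : ℕ) => SubstAC.sepNum_le hℓ θ x₀ p hp hper δ ν N k hδ hN
    rcases lt_or_eq_of_le (hcC.trans hCl) with hcl | hcl
    · rw [hcast _ hcl]
      obtain ⟨h0, h1⟩ := hlt _ hc hcl
      exact SubstAC.limsup_bound _ ℓ _ (2 * N + 1) h0 h1 (by positivity)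
        fun ν _ k hk => hsep ν k hk
    · rw [hcl, Nat.sub_self, Nat.cast_zero, zero_div] at hsep
      have hs1 : ∀ ν : ℝ, 0 < ν →
          sepNum cantorDist shift (orbitClosure x₀) δ ν ≤ ((ℓ ^ 1 : ℕ) : ℕ∞) := by
        intro ν hν
        apply hsep
        simpa using hν
      have hgen : ∀ lam : ℝ, ∀ ν : ℝ, 0 < ν → ∀ k : ℕ, (2 * (N : ℝ) + 1) * lam ^ k < ν →
          sepNum cantorDist shift (orbitClosure x₀) δ ν ≤ ((ℓ ^ k : ℕ) : ℕ∞) := by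
        intro lam ν hν k hk
        rcases Nat.eq_zero_or_pos k with h0 | h0
        · subst h0
          apply hsep
          simpa using hk
        · refine (hs1 ν hν).trans ?_
          exact_mod_cast Nat.pow_le_pow_right hℓ h0
      rw [hcl, sub_self, Real.log_zero, sub_zero]
      by_cases h1 : ℓ = 1
      · have := SubstAC.limsup_bound _ ℓ (1 / 2) (2 * N + 1) (by norm_num) (by norm_num)
          (by positivity) (hgen (1 / 2))
        refine this.trans ?_
        subst h1
        simp
      · have hl1 : (1 : ℝ) < ℓ := by
          have : 1 < ℓ := by omega
          exact_mod_cast this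
        have := SubstAC.limsup_bound _ ℓ ((ℓ : ℝ)⁻¹) (2 * N + 1) (by positivity)
          (inv_lt_one_of_one_lt₀ hl1) (by positivity) (hgen _)
        refine this.trans ?_
        rw [Real.log_inv, neg_neg]
  · intro hC
    have hCl' : cMax θ < ℓ := lt_of_le_of_ne hCl hC
    rw [hcast _ hCl']
    obtain ⟨h0, h1⟩ := hlt _ (lt_of_lt_of_le hc hcC) hCl'
    obtain ⟨κ, hκ, hsep⟩ := SubstAC.lower_sep hℓ θ hprim x₀ p hp hper hc hC
    unfold acLower
    refine le_iSup₂_of_le 1 one_pos ?_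
    apply SubstAC.liminf_bound _ ℓ hℓ _ κ h0 h1 hκ
    intro ν hν k hk
    apply SubstAC.le_sepNum x₀ (ℓ ^ k) ν hν
    intro i j hi hj hij
    exact hk.trans (hsep k i j hi hj hij)
end

section
/- Let θ : A → A^ℓ be a primitive substitution of constant length ℓ over a finite alphabet A with at least two letters, regarded as acting on the Besicovitch space [Σ]. Then there exists m ≥ 1 such that θ^m : [Σ] → [Σ] is a contraction (equivalently c(θ^m) > 0) if and only if θ has a coincidence, i.e. there exist k ≥ 1 and 0 ≤ j < ℓ^k such that θ^k(a)_j is the same letter for all a ∈ A. -/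
open Filter Topology Set MeasureTheory
open scoped ENNReal

theorem iter_congr {A : Type} {ℓ : ℕ} (hℓ : 0 < ℓ) (θ : A → Fin ℓ → A) (m : ℕ) :
    ∀ (x y : ℤ → A) (n q t : ℤ), x q = y (q + t) → n / (ℓ : ℤ) ^ m = q →
      (substApply hℓ θ)^[m] x n = (substApply hℓ θ)^[m] y (n + (ℓ : ℤ) ^ m * t) := by
  have h0 : (ℓ : ℤ) ≠ 0 := by exact_mod_cast hℓ.ne'
  induction m with
  | zero =>
    intro x y n q t h hn
    simp at hn
    subst hn
    simpa using h
  | succ m ih =>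
    intro x y n q t h hn
    rw [Function.iterate_succ_apply', Function.iterate_succ_apply']
    have e1 : (n + (ℓ : ℤ) ^ (m + 1) * t) / (ℓ : ℤ) = n / ℓ + (ℓ : ℤ) ^ m * t := by
      rw [show n + (ℓ : ℤ) ^ (m + 1) * t = n + (ℓ : ℤ) * ((ℓ : ℤ) ^ m * t) by ring,
        Int.add_mul_ediv_left _ _ h0]
    have e2 : (n + (ℓ : ℤ) ^ (m + 1) * t) % (ℓ : ℤ) = n % ℓ := by
      rw [show n + (ℓ : ℤ) ^ (m + 1) * t = n + (ℓ : ℤ) * ((ℓ : ℤ) ^ m * t) by ring,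
        Int.add_mul_emod_self_left]
    have e3 : n / (ℓ : ℤ) / (ℓ : ℤ) ^ m = q := by
      rw [Int.ediv_ediv_of_nonneg (by positivity), ← hn, pow_succ']
    have := ih x y (n / ℓ) q t h e3
    unfold substApply at this ⊢
    simp only [e1, e2]
    rw [this]

theorem iter_block {A : Type} {ℓ : ℕ} (hℓ : 0 < ℓ) (θ : A → Fin ℓ → A) (m : ℕ)
    (x : ℤ → A) (q j : ℤ) (hj : 0 ≤ j) (hj2 : j < (ℓ : ℤ) ^ m) :
    (substApply hℓ θ)^[m] x ((ℓ : ℤ) ^ m * q + j) =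
      (substApply hℓ θ)^[m] (fun _ => x q) j := by
  have h0 : (0 : ℤ) < (ℓ : ℤ) ^ m := by positivity
  have := iter_congr hℓ θ m (fun _ => x q) x j 0 q (by simp) (Int.ediv_eq_zero_of_lt hj hj2)
  rw [this, add_comm]

theorem iter_ediv {A : Type} {ℓ : ℕ} (hℓ : 0 < ℓ) (θ : A → Fin ℓ → A) (m : ℕ)
    (x : ℤ → A) (n : ℤ) :
    (substApply hℓ θ)^[m] x n =
      (substApply hℓ θ)^[m] (fun _ => x (n / (ℓ : ℤ) ^ m)) (n % (ℓ : ℤ) ^ m) := by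
  have h0 : (0 : ℤ) < (ℓ : ℤ) ^ m := by positivity
  rw [← iter_block hℓ θ m x _ _ (Int.emod_nonneg _ h0.ne') (Int.emod_lt_of_pos _ h0),
    Int.mul_ediv_add_emod]

theorem coinc_of_pairs {A : Type} [Fintype A] {ℓ : ℕ} (hℓ : 0 < ℓ) (θ : A → Fin ℓ → A)
    (m : ℕ) (hm : 1 ≤ m)
    (H : ∀ a b : A, a ≠ b → ∃ j : ℤ, 0 ≤ j ∧ j < (ℓ : ℤ) ^ m ∧
      (substApply hℓ θ)^[m] (fun _ => a) j = (substApply hℓ θ)^[m] (fun _ => b) j) (s : ℕ) :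
    ∀ S : Finset A, S.card ≤ s → ∃ k : ℕ, 1 ≤ k ∧ ∃ j : ℤ, 0 ≤ j ∧ j < (ℓ : ℤ) ^ k ∧
      ∀ a ∈ S, ∀ b ∈ S,
        (substApply hℓ θ)^[k] (fun _ => a) j = (substApply hℓ θ)^[k] (fun _ => b) j := by
  classical
  induction s with
  | zero =>
    intro S hS
    have : S = ∅ := by simpa using hS
    subst this
    exact ⟨1, le_rfl, 0, le_rfl, by positivity, by simp⟩
  | succ s ih =>
    intro S hS
    by_cases hp : ∃ a ∈ S, ∃ b ∈ S, a ≠ b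
    · obtain ⟨a, ha, b, hb, hab⟩ := hp
      obtain ⟨j, hj0, hj1, hj⟩ := H a b hab
      have hlt : (S.image (fun c => (substApply hℓ θ)^[m] (fun _ => c) j)).card < S.card := by
        refine lt_of_le_of_ne Finset.card_image_le ?_
        intro h
        exact hab (Finset.card_image_iff.1 h ha hb hj)
      obtain ⟨k, hk, i, hi0, hi1, hi⟩ := ih _ (Nat.le_of_lt_succ (hlt.trans_le hS))
      refine ⟨k + m, by omega, (ℓ : ℤ) ^ k * j + i, by positivity, ?_, ?_⟩
      · have : (0 : ℤ) < (ℓ : ℤ) ^ k := by positivity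
        rw [pow_add]
        nlinarith
      · intro c hc d hd
        rw [Function.iterate_add_apply, Function.iterate_add_apply,
          iter_block hℓ θ k _ _ _ hi0 hi1, iter_block hℓ θ k _ _ _ hi0 hi1]
        exact hi _ (Finset.mem_image_of_mem _ hc) _ (Finset.mem_image_of_mem _ hd)
    · push Not at hp
      refine ⟨1, le_rfl, 0, le_rfl, by positivity, fun a ha b hb => ?_⟩
      rw [hp a ha b hb]

/-- Counting function. -/
noncomputable def cnt (E : Set ℕ) (n : ℕ) : ℝ := ∑ k ∈ Finset.range n, E.indicator (fun _ => (1 : ℝ)) k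

theorem cnt_nonneg (E : Set ℕ) (n : ℕ) : 0 ≤ cnt E n :=
  Finset.sum_nonneg fun _ _ => Set.indicator_nonneg (fun _ _ => zero_le_one) _

theorem ind_le (E : Set ℕ) (k : ℕ) : E.indicator (fun _ => (1 : ℝ)) k ≤ 1 := by
  by_cases h : k ∈ E <;> simp [h]

theorem cnt_le (E : Set ℕ) (n : ℕ) : cnt E n ≤ n := by
  have := Finset.sum_le_sum (s := Finset.range n) (fun k _ => ind_le E k)
  simpa [cnt] using this

theorem cnt_mono (E : Set ℕ) {n n' : ℕ} (h : n ≤ n') : cnt E n ≤ cnt E n' :=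
  Finset.sum_le_sum_of_subset_of_nonneg (by simpa using h)
    fun _ _ _ => Set.indicator_nonneg (fun _ _ => zero_le_one) _

theorem cnt_div_le (E : Set ℕ) (n : ℕ) : cnt E n / n ≤ 1 :=
  div_le_one_of_le₀ (cnt_le E n) (by positivity)

theorem upperDensity_eq (E : Set ℕ) :
    upperDensity E = Filter.limsup (fun n : ℕ => cnt E n / n) Filter.atTop := rfl

theorem bdd (E : Set ℕ) : IsBoundedUnder (· ≤ ·) atTop (fun n : ℕ => cnt E n / n) :=
  isBoundedUnder_of ⟨1, fun n => cnt_div_le E n⟩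

theorem cobdd (E : Set ℕ) : IsCoboundedUnder (· ≤ ·) atTop (fun n : ℕ => cnt E n / n) :=
  (isBoundedUnder_of ⟨0, fun n => div_nonneg (cnt_nonneg E n) (by positivity)⟩ :
    IsBoundedUnder (· ≥ ·) atTop (fun n : ℕ => cnt E n / n)).isCoboundedUnder_le

theorem upperDensity_univ : upperDensity Set.univ = 1 := by
  rw [upperDensity_eq]
  refine Tendsto.limsup_eq (tendsto_const_nhds.congr' ?_)
  filter_upwards [eventually_gt_atTop 0] with n hn
  have : (n : ℝ) ≠ 0 := by exact_mod_cast hn.ne'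
  simp [cnt, this]

theorem cnt_block (E F : Set ℕ) (L j : ℕ) (hj : j < L)
    (h : ∀ q i, i < L → L * q + i ∈ F → q ∈ E ∧ i ≠ j) (q : ℕ) :
    cnt F (L * q) ≤ ((L : ℝ) - 1) * cnt E q := by
  induction q with
  | zero => simp [cnt]
  | succ q ih =>
    have e1 : cnt F (L * (q + 1)) = cnt F (L * q) +
        ∑ i ∈ Finset.range L, F.indicator (fun _ => (1 : ℝ)) (L * q + i) := by
      rw [cnt, cnt, mul_add, mul_one, Finset.sum_range_add]
    have e2 : cnt E (q + 1) = cnt E q + E.indicator (fun _ => (1 : ℝ)) q := by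
      rw [cnt, cnt, Finset.sum_range_succ]
    have e3 : ∑ i ∈ Finset.range L, F.indicator (fun _ => (1 : ℝ)) (L * q + i) ≤
        ((L : ℝ) - 1) * E.indicator (fun _ => (1 : ℝ)) q := by
      have hjm : j ∈ Finset.range L := Finset.mem_range.2 hj
      have hz : F.indicator (fun _ => (1 : ℝ)) (L * q + j) = 0 :=
        Set.indicator_of_notMem (fun hF => (h q j hj hF).2 rfl) _
      rw [← Finset.add_sum_erase _ _ hjm, hz, zero_add]
      refine (Finset.sum_le_card_nsmul _ _ (E.indicator (fun _ => (1 : ℝ)) q) ?_).trans ?_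
      · intro i hi
        have hi' : i < L := by simpa using (Finset.mem_erase.1 hi).2
        by_cases hF : L * q + i ∈ F
        · simp [hF, (h q i hi' hF).1]
        · rw [Set.indicator_of_notMem hF]
          exact Set.indicator_nonneg (fun _ _ => zero_le_one) _
      · rw [Finset.card_erase_of_mem hjm, Finset.card_range, nsmul_eq_mul,
          Nat.cast_sub (by omega), Nat.cast_one]
    rw [e1, e2, mul_add]
    exact add_le_add ih e3

theorem density_block (E F : Set ℕ) (L j : ℕ) (hj : j < L)
    (h : ∀ q i, i < L → L * q + i ∈ F → q ∈ E ∧ i ≠ j) :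
    upperDensity F ≤ (1 - 1 / (L : ℝ)) * upperDensity E := by
  have hL : (0 : ℝ) < L := by exact_mod_cast (by omega : 0 < L)
  have hL1 : (1 : ℝ) ≤ L := by exact_mod_cast (by omega : 1 ≤ L)
  have hinv : 1 / (L : ℝ) ≤ 1 := by rw [div_le_one hL]; exact hL1
  have hinv0 : 0 < 1 / (L : ℝ) := by positivity
  set d := upperDensity E with hd
  refine le_of_forall_pos_le_add fun ε hε => ?_
  have ev1 : ∀ᶠ q : ℕ in atTop, cnt E q / q < d + ε / 2 :=
    eventually_lt_of_limsup_lt (by rw [← upperDensity_eq]; linarith) (bdd E)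
  have hT : Tendsto (fun n : ℕ => n / L) atTop atTop :=
    Nat.tendsto_div_const_atTop (by omega)
  have ev2 := hT.eventually ev1
  have ev3 : ∀ᶠ n : ℕ in atTop, (L : ℝ) / n < ε / 2 :=
    (tendsto_const_div_atTop_nhds_zero_nat (L : ℝ)).eventually_lt_const (by linarith)
  have ev4 := hT.eventually (eventually_gt_atTop 0)
  rw [upperDensity_eq F]
  refine limsup_le_of_le (cobdd F) ?_
  filter_upwards [ev2, ev3, ev4, eventually_gt_atTop 0] with n h2 h3 h4 h5
  have hn : (0 : ℝ) < n := by exact_mod_cast h5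
  have hq : (0 : ℝ) < ((n / L : ℕ) : ℝ) := by exact_mod_cast h4
  have hdpos : 0 ≤ d + ε / 2 := (div_nonneg (cnt_nonneg E _) hq.le).trans h2.le
  have hle : n ≤ L * (n / L + 1) := (Nat.lt_mul_div_succ n (by omega)).le
  have c1 := (cnt_mono F hle).trans (cnt_block E F L j hj h (n / L + 1))
  have c2 : cnt E (n / L + 1) ≤ cnt E (n / L) + 1 := by
    rw [cnt, cnt, Finset.sum_range_succ]
    linarith [ind_le E (n / L)]
  rw [div_lt_iff₀ hq] at h2
  have c3 : (L : ℝ) * ((n / L : ℕ) : ℝ) ≤ n := by exact_mod_cast Nat.mul_div_le n L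
  have c4 : ((n / L : ℕ) : ℝ) ≤ n / L := by rw [le_div_iff₀ hL]; linarith
  have c5 : cnt E (n / L + 1) ≤ (d + ε / 2) * (n / L) + 1 := by
    have := mul_le_mul_of_nonneg_left c4 hdpos
    linarith
  have c6 : cnt F n ≤ ((L : ℝ) - 1) * ((d + ε / 2) * (n / L) + 1) :=
    c1.trans (mul_le_mul_of_nonneg_left c5 (by linarith))
  have c7 : cnt F n / n ≤ (1 - 1 / (L : ℝ)) * (d + ε / 2) + (L - 1) / n := by
    rw [div_le_iff₀ hn]
    refine c6.trans (le_of_eq ?_)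
    field_simp
  have c8 : ((L : ℝ) - 1) / n ≤ L / n := by gcongr; linarith
  nlinarith

/-- For a primitive constant length substitution `θ` over an alphabet
with at least two letters, some power `θ^m` (`m ≥ 1`) is a contraction of the Besicovitch
space `([Σ],D_1)` (equivalently `c(θ^m) > 0`) if and only if `θ` has a coincidence. -/
theorem substitution_power_contraction_iff_coincidence
    {A : Type} [Fintype A] (hA : ∃ a b : A, a ≠ b)
    {ℓ : ℕ} (hℓ : 0 < ℓ) (θ : A → Fin ℓ → A) (hprim : IsPrimitive hℓ θ) :
    (∃ m : ℕ, 1 ≤ m ∧ ∃ r : ℝ, r < 1 ∧ ∀ x y : ℤ → A,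
        besD1 ((substApply hℓ θ)^[m] x) ((substApply hℓ θ)^[m] y) ≤ r * besD1 x y) ↔
      (∃ k : ℕ, 1 ≤ k ∧ ∃ j : ℤ, 0 ≤ j ∧ j < (ℓ : ℤ) ^ k ∧ ∀ a b : A,
        (substApply hℓ θ)^[k] (fun _ => a) j = (substApply hℓ θ)^[k] (fun _ => b) j) := by
  constructor
  · rintro ⟨m, hm, r, hr, H⟩
    obtain ⟨k, hk, j, h0, h1, h2⟩ := coinc_of_pairs hℓ θ m hm (fun a b hab => by
      by_contra! hc
      have h0 : (0 : ℤ) < (ℓ : ℤ) ^ m := by positivity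
      have := H (fun _ => a) (fun _ => b)
      have e1 : besD1 (fun _ : ℤ => a) (fun _ => b) = 1 := by
        rw [besD1, ← upperDensity_univ]
        congr 1
        ext n
        simp [hab]
      have e2 : besD1 ((substApply hℓ θ)^[m] (fun _ : ℤ => a))
          ((substApply hℓ θ)^[m] (fun _ => b)) = 1 := by
        rw [besD1, ← upperDensity_univ]
        congr 1
        ext n
        simp only [Set.mem_ofPred_eq, Set.mem_univ, iff_true]
        rw [iter_ediv, iter_ediv hℓ θ m (fun _ => b)]
        exact hc _ (Int.emod_nonneg _ h0.ne') (Int.emod_lt_of_pos _ h0)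
      rw [e1, e2] at this
      linarith) _ Finset.univ le_rfl
    exact ⟨k, hk, j, h0, h1, fun a b => h2 a (Finset.mem_univ _) b (Finset.mem_univ _)⟩
  · rintro ⟨k, hk, j, h0, h1, H⟩
    lift j to ℕ using h0
    have hL : (0 : ℝ) < ((ℓ ^ k : ℕ) : ℝ) := by positivity
    refine ⟨k, hk, 1 - 1 / ((ℓ ^ k : ℕ) : ℝ), by linarith [one_div_pos.2 hL], fun x y => ?_⟩
    refine density_block _ _ (ℓ ^ k) j (by exact_mod_cast h1) ?_
    intro q i hi hF
    have hi' : (i : ℤ) < (ℓ : ℤ) ^ k := by exact_mod_cast hi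
    simp only [Set.mem_ofPred_eq] at hF ⊢
    push_cast at hF
    rw [iter_block hℓ θ k _ _ _ (by positivity) hi',
      iter_block hℓ θ k _ _ _ (by positivity) hi'] at hF
    constructor
    · intro h
      rw [h] at hF
      exact hF rfl
    · rintro rfl
      exact hF (H _ _)
end
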